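/- Let A ⊂ F_p satisfy |A| < p^{2/3}. Then for any subset B ⊂ F_p, E_4^+(A,B) ≲ |B|³ |AA|² |A|^{-1}, where E_4^+(A,B) counts 8-tuples with a_1-b_1 = a_2-b_2 = a_3-b_3 = a_4-b_4, a_i ∈ A, b_i ∈ B, and ≲ hides absolute constants and logarithmic factors. -/

import Mathlib

open Pointwise

/-!
Fix a level `t` and let `S` be the set of `x` having at least `t` representations `a - b = x`.
For `x = a - b` in `S` and `a' ∈ A` one has `a' * (x + b) = a' * a ∈ AA`, so the products
`a' * (x + b)` fall in `AA` at least `t |A| |S|` times. By Cauchy-Schwarz the square of this number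
is at most `|AA|` times the number of collisions `a * (x' + b) = a' * (x + b')`, which counts
incidences between points and planes over a field of characteristic `p`.

Dual points and planes become two families of lines in space. A polynomial of small degree vanishes
on one family; a line of the other family meeting many of them lies on its zero set. On an
irreducible factor of the polynomial, the flecnode condition and Bezout bound the number of such
lines as long as the degree stays below `p`, which is where `|A| |B| |S|` has to be small compared
with `p ^ 2`. For larger sets the second moment of incidences over a plane suffices.

The resulting bounds on the level sets, summed over `t`, give the energy; the sum over levels
costs the logarithm.
-/

namespace PointPlane

open MvPolynomial

section MvPolynomialDegree

variable {σ R : Type*}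

lemma derivation_algHom_apply [CommRing R] [Fintype σ] {B : Type*} [CommRing B] [Algebra R B]
    (d : Derivation R B B) (φ : MvPolynomial σ R →ₐ[R] B) (g : MvPolynomial σ R) :
    d (φ g) = ∑ i, φ (pderiv i g) * d (φ (X i)) := by
  classical
  induction g using MvPolynomial.induction_on with
  | C a =>
    have hC : φ (C a) = algebraMap R B a := φ.commutes a
    simp [hC]
  | add p q hp hq => simp [hp, hq, Finset.sum_add_distrib, add_mul]
  | mul_X p i hp =>
    simp only [map_mul, Derivation.leibniz, hp, smul_eq_mul, map_add, pderiv_X, add_mul,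
      Finset.sum_add_distrib, Finset.mul_sum, Pi.single_apply, mul_ite, mul_one, mul_zero,
      apply_ite φ, map_zero, ite_mul, zero_mul, Finset.sum_ite_eq, Finset.mem_univ, if_true]
    congr 1
    exact Finset.sum_congr rfl fun _ _ ↦ by ring

lemma totalDegree_pderiv_le [CommSemiring R] (i : σ) (g : MvPolynomial σ R) :
    (pderiv i g).totalDegree ≤ g.totalDegree := by
  conv_lhs => rw [g.as_sum, map_sum]
  refine totalDegree_finsetSum_le fun s hs ↦ ?_
  rw [pderiv_monomial]
  exact (totalDegree_monomial_le _ _).trans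
    ((Finsupp.degree_mono tsub_le_self).trans (le_totalDegree hs))

lemma totalDegree_sub_le_of_le [CommRing R] {f g : MvPolynomial σ R} {n : ℕ}
    (hf : f.totalDegree ≤ n) (hg : g.totalDegree ≤ n) : (f - g).totalDegree ≤ n :=
  (totalDegree_sub f g).trans (max_le hf hg)

lemma totalDegree_mul_le_of_le [CommSemiring R] {f g : MvPolynomial σ R} {m n : ℕ}
    (hf : f.totalDegree ≤ m) (hg : g.totalDegree ≤ n) : (f * g).totalDegree ≤ m + n :=
  (totalDegree_mul f g).trans (add_le_add hf hg)

lemma totalDegree_resultant_le [CommRing R] (f g : Polynomial (MvPolynomial σ R)) (m n : ℕ)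
    {D E : ℕ} (hf : ∀ i, (f.coeff i).totalDegree ≤ D) (hg : ∀ i, (g.coeff i).totalDegree ≤ E) :
    (Polynomial.resultant f g m n).totalDegree ≤ m * E + n * D := by
  have term_le (π : Equiv.Perm (Fin (m + n))) :
      (∏ i, Polynomial.sylvester f g m n (π i) i).totalDegree ≤ m * E + n * D := by
    refine (totalDegree_finsetProd _ _).trans ?_
    rw [Fin.sum_univ_add]
    refine add_le_add ((Finset.sum_le_card_nsmul _ _ E fun i _ ↦ ?_).trans (by simp))
      ((Finset.sum_le_card_nsmul _ _ D fun i _ ↦ ?_).trans (by simp))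
    all_goals
      simp only [Polynomial.sylvester, Matrix.of_apply, Fin.addCases_left, Fin.addCases_right]
      split_ifs
    exacts [hg _, by simp, hf _, by simp]
  rw [Polynomial.resultant, Matrix.det_apply]
  refine totalDegree_finsetSum_le fun π _ ↦ ?_
  rcases Int.units_eq_one_or (Equiv.Perm.sign π) with h | h
  · simpa [h] using term_le π
  · simpa [h, Units.smul_def] using term_le π

end MvPolynomialDegree

section FinSuccEquiv

variable {R : Type*} [CommSemiring R] {n : ℕ}

lemma totalDegree_coeff_finSuccEquiv_le (f : MvPolynomial (Fin (n + 1)) R) (i : ℕ) :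
    ((finSuccEquiv R n f).coeff i).totalDegree ≤ f.totalDegree := by
  by_cases h : (finSuccEquiv R n f).coeff i = 0
  · simp [h]
  · exact (Nat.le_add_right _ _).trans (totalDegree_coeff_finSuccEquiv_add_le f i h)

lemma natDegree_finSuccEquiv_le_totalDegree (f : MvPolynomial (Fin (n + 1)) R) :
    (finSuccEquiv R n f).natDegree ≤ f.totalDegree :=
  (natDegree_finSuccEquiv f).trans_le (degreeOf_le_totalDegree _ _)

lemma finSuccEquiv_rename_succ (h : MvPolynomial (Fin n) R) :
    finSuccEquiv R n (rename Fin.succ h) = Polynomial.C h := by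
  induction h using MvPolynomial.induction_on with
  | C a => simp [finSuccEquiv_apply]
  | add p q hp hq => simp [hp, hq]
  | mul_X p i hp => rw [map_mul, map_mul, hp, rename_X, finSuccEquiv_X_succ, Polynomial.C_mul]

lemma finSuccEquiv_pderiv_zero (f : MvPolynomial (Fin (n + 1)) R) :
    finSuccEquiv R n (pderiv 0 f) = Polynomial.derivative (finSuccEquiv R n f) := by
  induction f using MvPolynomial.induction_on with
  | C a => simp [finSuccEquiv_apply]
  | add p q hp hq => simp [hp, hq]
  | mul_X p i hp =>
    cases i using Fin.cases with
    | zero => simp [hp, finSuccEquiv_X_zero, pderiv_X, mul_comm]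
    | succ j => simp [hp, finSuccEquiv_X_succ, pderiv_X, mul_comm]

end FinSuccEquiv

section Roots

variable {R : Type*} [CommRing R] [IsDomain R] {n : ℕ}

lemma card_le_totalDegree_of_eval_finSuccEquiv_eq_zero {h : MvPolynomial (Fin (n + 1)) R}
    (h0 : h ≠ 0) (Y : Finset R)
    (hY : ∀ y ∈ Y, (finSuccEquiv R n h).eval (C y) = 0) : Y.card ≤ h.totalDegree := by
  classical
  have hne : finSuccEquiv R n h ≠ 0 := by simpa using h0
  have hroots : (Y.image (C : R → MvPolynomial (Fin n) R)).val ⊆ (finSuccEquiv R n h).roots := by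
    intro c hc
    obtain ⟨y, hy, rfl⟩ := Finset.mem_image.1 hc
    exact (Polynomial.mem_roots hne).2 (hY y hy)
  rw [← Finset.card_image_of_injective Y (C_injective (Fin n) R)]
  exact (Polynomial.card_le_degree_of_subset_roots hroots).trans
    (natDegree_finSuccEquiv_le_totalDegree h)

end Roots

section Lines

variable {K : Type*}

/-- A triple `r` stands for a point and a triple `b` for the plane
`{(t, u, v) | u * b 0 + v = b 1 * t + b 2}`; this is their incidence relation. -/
def Meets [Mul K] [Add K] (r b : Fin 3 → K) : Prop :=
  r 1 * b 0 + r 2 = b 1 * r 0 + b 2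

variable [CommRing K]

/-- Restriction of a polynomial in the variables `0 = z`, `1 = y`, `2 = x` to the *red line*
`{x = r 0, z = r 1 * y + r 2}` attached to the point `r`, parametrised by `y`. -/
noncomputable def restrictRed (r : Fin 3 → K) : MvPolynomial (Fin 3) K →ₐ[K] Polynomial K :=
  aeval ![Polynomial.C (r 1) * Polynomial.X + Polynomial.C (r 2), Polynomial.X,
    Polynomial.C (r 0)]

/-- Restriction of a polynomial in the variables `0 = z`, `1 = y`, `2 = x` to the *blue line*
`{y = b 0, z = b 1 * x + b 2}` attached to the plane `b`, parametrised by `x`. The red line of `r`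
meets the blue line of `b` exactly when `Meets r b`. -/
noncomputable def restrictBlue (b : Fin 3 → K) : MvPolynomial (Fin 3) K →ₐ[K] Polynomial K :=
  aeval ![Polynomial.C (b 1) * Polynomial.X + Polynomial.C (b 2), Polynomial.C (b 0),
    Polynomial.X]

lemma natDegree_restrictRed_le (r : Fin 3 → K) (f : MvPolynomial (Fin 3) K) :
    (restrictRed r f).natDegree ≤ f.totalDegree := by
  refine (aeval_natDegree_le f le_rfl _ fun i ↦ ?_).trans_eq (mul_one _)
  fin_cases i
  exacts [Polynomial.natDegree_linear_le, Polynomial.natDegree_X_le, by simp]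

lemma natDegree_restrictBlue_le (b : Fin 3 → K) (f : MvPolynomial (Fin 3) K) :
    (restrictBlue b f).natDegree ≤ f.totalDegree := by
  refine (aeval_natDegree_le f le_rfl _ fun i ↦ ?_).trans_eq (mul_one _)
  fin_cases i
  exacts [Polynomial.natDegree_linear_le, by simp, Polynomial.natDegree_X_le]

lemma Meets.eval_restrictRed {r b : Fin 3 → K} (h : Meets r b) (f : MvPolynomial (Fin 3) K) :
    (restrictRed r f).eval (b 0) = (restrictBlue b f).eval (r 0) := by
  have hom_eq : (Polynomial.aeval (b 0)).comp (restrictRed r) =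
      (Polynomial.aeval (r 0)).comp (restrictBlue b) := by
    refine MvPolynomial.algHom_ext fun i ↦ ?_
    have hrb : r 1 * b 0 + r 2 = b 1 * r 0 + b 2 := h
    fin_cases i <;> simp [restrictRed, restrictBlue, hrb]
  simpa [Polynomial.aeval_def] using congr($hom_eq f)

lemma card_le_totalDegree_of_meets [IsDomain K] {f : MvPolynomial (Fin 3) K} {b : Fin 3 → K}
    (hb : restrictBlue b f ≠ 0) {T : Finset (Fin 3 → K)}
    (hT : Set.InjOn (fun r : Fin 3 → K ↦ r 0) T) (hmeet : ∀ r ∈ T, Meets r b)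
    (hred : ∀ r ∈ T, restrictRed r f = 0) : T.card ≤ f.totalDegree := by
  classical
  rw [← Finset.card_image_of_injOn hT]
  refine (Polynomial.card_le_degree_of_subset_roots (p := restrictBlue b f) fun x hx ↦ ?_).trans
    (natDegree_restrictBlue_le b f)
  obtain ⟨r, hr, rfl⟩ := Finset.mem_image.1 hx
  rw [Polynomial.mem_roots hb, Polynomial.IsRoot, ← (hmeet r hr).eval_restrictRed, hred r hr,
    Polynomial.eval_zero]

lemma restrictBlue_rename_succ (b : Fin 3 → K) (h : MvPolynomial (Fin 2) K) :
    restrictBlue b (rename Fin.succ h) =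
      uniqueAlgEquiv K (Fin 1) ((finSuccEquiv K 1 h).eval (C (b 0))) := by
  have hom_eq : (restrictBlue b).comp (rename Fin.succ) =
      (((uniqueAlgEquiv K (Fin 1)).toAlgHom.comp
        ((Polynomial.aeval (C (b 0) : MvPolynomial (Fin 1) K)).restrictScalars K)).comp
          (finSuccEquiv K 1).toAlgHom) := by
    refine MvPolynomial.algHom_ext fun i ↦ ?_
    have hX1 : finSuccEquiv K 1 (X 1) = Polynomial.C (X 0) := finSuccEquiv_X_succ (j := 0)
    fin_cases i <;> simp [restrictBlue, finSuccEquiv_X_zero, hX1, uniqueAlgEquiv]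
  simpa [Polynomial.aeval_def, Polynomial.eval₂_eq_eval_map] using congr($hom_eq h)

end Lines

section Bezout

variable {K : Type*}

lemma card_le_totalDegree_of_restrictBlue_rename_eq_zero [CommRing K] [IsDomain K]
    {h : MvPolynomial (Fin 2) K} (h0 : h ≠ 0) {J : Finset (Fin 3 → K)}
    (hJ : Set.InjOn (fun b : Fin 3 → K ↦ b 0) J)
    (hblue : ∀ b ∈ J, restrictBlue b (rename Fin.succ h) = 0) : J.card ≤ h.totalDegree := by
  classical
  rw [← Finset.card_image_of_injOn hJ]
  refine card_le_totalDegree_of_eval_finSuccEquiv_eq_zero h0 _ fun y hy ↦ ?_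
  obtain ⟨b, hb, rfl⟩ := Finset.mem_image.1 hy
  rw [← EmbeddingLike.map_eq_zero_iff (f := uniqueAlgEquiv K (Fin 1)), ← restrictBlue_rename_succ]
  exact hblue b hb

lemma resultant_ne_zero_of_not_dvd {R : Type*} [CommRing R] [IsDomain R]
    [UniqueFactorizationMonoid R] {f g : Polynomial R} (hf : Irreducible f)
    (hdeg : f.natDegree ≠ 0) (hfg : ¬ f ∣ g) : Polynomial.resultant f g ≠ 0 := by
  let _ : GCDMonoid R := UniqueFactorizationMonoid.toGCDMonoid R
  let ι := algebraMap R (FractionRing R)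
  have hprim := hf.isPrimitive hdeg
  have hcop : IsCoprime (f.map ι) (g.map ι) :=
    (hprim.irreducible_iff_irreducible_map_fraction_map.1 hf).coprime_iff_not_dvd.2
      fun h ↦ hfg (hprim.dvd_of_fraction_map_dvd_fraction_map h)
  have hinj : Function.Injective ι := IsFractionRing.injective R _
  intro h0
  have hmap := Polynomial.resultant_map_map f g f.natDegree g.natDegree ι
  rw [h0, map_zero, ← Polynomial.natDegree_map_eq_of_injective hinj f,
    ← Polynomial.natDegree_map_eq_of_injective hinj g, Polynomial.resultant_eq_zero_iff] at hmap
  exact hmap.2 hcop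

variable [Field K] {f g : MvPolynomial (Fin 3) K} {J : Finset (Fin 3 → K)}

lemma card_le_totalDegree_of_natDegree_finSuccEquiv_eq_zero (hf : f ≠ 0)
    (hdeg : (finSuccEquiv K 2 f).natDegree = 0)
    (hJ : Set.InjOn (fun b : Fin 3 → K ↦ b 0) J) (hblue : ∀ b ∈ J, restrictBlue b f = 0) :
    J.card ≤ f.totalDegree := by
  have hrename : rename Fin.succ ((finSuccEquiv K 2 f).coeff 0) = f := by
    apply (finSuccEquiv K 2).injective
    rw [finSuccEquiv_rename_succ, ← Polynomial.eq_C_of_natDegree_eq_zero hdeg]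
  refine (card_le_totalDegree_of_restrictBlue_rename_eq_zero ?_ hJ
    (by simpa only [hrename] using hblue)).trans (totalDegree_coeff_finSuccEquiv_le f 0)
  intro h0
  rw [h0, map_zero] at hrename
  exact hf hrename.symm

lemma card_le_of_irreducible_of_not_dvd (hf : Irreducible f) (hfg : ¬ f ∣ g)
    (hJ : Set.InjOn (fun b : Fin 3 → K ↦ b 0) J) (hJf : ∀ b ∈ J, restrictBlue b f = 0)
    (hJg : ∀ b ∈ J, restrictBlue b g = 0) :
    J.card ≤ 2 * f.totalDegree * g.totalDegree + f.totalDegree := by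
  set f' := finSuccEquiv K 2 f
  set g' := finSuccEquiv K 2 g
  by_cases hdeg : f'.natDegree = 0
  · exact (card_le_totalDegree_of_natDegree_finSuccEquiv_eq_zero hf.ne_zero hdeg hJ hJf).trans
      (Nat.le_add_left _ _)
  have hres : Polynomial.resultant f' g' ≠ 0 := resultant_ne_zero_of_not_dvd
    ((MulEquiv.irreducible_iff (finSuccEquiv K 2)).2 hf) hdeg (by rwa [map_dvd_iff])
  obtain ⟨P, Q, -, -, hPQ⟩ := Polynomial.exists_mul_add_mul_eq_C_resultant f' g' le_rfl le_rfl
    (Or.inl hdeg)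
  have hcomb : rename Fin.succ (Polynomial.resultant f' g') =
      f * (finSuccEquiv K 2).symm P + g * (finSuccEquiv K 2).symm Q := by
    apply (finSuccEquiv K 2).injective
    rw [finSuccEquiv_rename_succ, ← hPQ, map_add, map_mul, map_mul, AlgEquiv.apply_symm_apply,
      AlgEquiv.apply_symm_apply]
  have hcard : J.card ≤ f'.natDegree * g.totalDegree + g'.natDegree * f.totalDegree :=
    (card_le_totalDegree_of_restrictBlue_rename_eq_zero hres hJ fun b hb ↦ by
      simp [hcomb, hJf b hb, hJg b hb]).trans
    (totalDegree_resultant_le f' g' _ _ (totalDegree_coeff_finSuccEquiv_le f)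
      (totalDegree_coeff_finSuccEquiv_le g))
  have hf'deg : f'.natDegree ≤ f.totalDegree := natDegree_finSuccEquiv_le_totalDegree f
  have hg'deg : g'.natDegree ≤ g.totalDegree := natDegree_finSuccEquiv_le_totalDegree g
  calc J.card ≤ f'.natDegree * g.totalDegree + g'.natDegree * f.totalDegree := hcard
    _ ≤ f.totalDegree * g.totalDegree + g.totalDegree * f.totalDegree := by gcongr
    _ ≤ 2 * f.totalDegree * g.totalDegree + f.totalDegree := by linarith

lemma natCast_ne_zero_of_factorial_ne_zero {R : Type*} [Semiring R] {d j : ℕ}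
    (hd : (d.factorial : R) ≠ 0) (hj : 0 < j) (hjd : j ≤ d) : (j : R) ≠ 0 := by
  obtain ⟨m, hm⟩ := Nat.dvd_factorial hj hjd
  rintro h0
  simp [hm, h0] at hd

lemma card_le_totalDegree_of_dvd_pderiv_zero (hd : (f.totalDegree.factorial : K) ≠ 0) (hf : f ≠ 0)
    (hdvd : f ∣ pderiv 0 f) (hJ : Set.InjOn (fun b : Fin 3 → K ↦ b 0) J)
    (hblue : ∀ b ∈ J, restrictBlue b f = 0) : J.card ≤ f.totalDegree := by
  refine card_le_totalDegree_of_natDegree_finSuccEquiv_eq_zero hf ?_ hJ hblue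
  by_contra hdeg
  set f' := finSuccEquiv K 2 f
  have hf' : f'.leadingCoeff ≠ 0 := by simpa [f'] using hf
  have hdvd' : f' ∣ Polynomial.derivative f' := by
    rw [← finSuccEquiv_pderiv_zero]; exact map_dvd _ hdvd
  have hderiv : Polynomial.derivative f' = 0 := by
    by_contra hne
    exact (Polynomial.natDegree_derivative_lt hdeg).not_ge
      (Polynomial.natDegree_le_of_dvd hdvd' hne)
  have hcast : (f'.natDegree : K) ≠ 0 := natCast_ne_zero_of_factorial_ne_zero hd (by omega)
    (natDegree_finSuccEquiv_le_totalDegree f)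
  have hcoeff := congr(Polynomial.coeff $hderiv (f'.natDegree - 1))
  rw [Polynomial.coeff_derivative, Nat.sub_add_cancel (by omega), Polynomial.coeff_zero,
    ← Nat.cast_add_one, Nat.sub_add_cancel (by omega)] at hcoeff
  refine (mul_ne_zero hf' ?_) hcoeff
  rw [← map_natCast (C : K →+* MvPolynomial (Fin 2) K)]
  exact (map_ne_zero_iff _ (C_injective _ _)).2 hcast

end Bezout

section CoeffDerivation

variable {R A : Type*} [CommRing R] [CommRing A] [Algebra R A] (d : Derivation R A A)

/-- The derivation of `A[X]` that applies a derivation of `A` to each coefficient. -/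
noncomputable def coeffDerivation : Derivation R (Polynomial A) (Polynomial A) :=
  PolynomialModule.equivPolynomialSelf.compDer d.mapCoeffs

lemma coeff_coeffDerivation (p : Polynomial A) (i : ℕ) :
    (coeffDerivation d p).coeff i = d (p.coeff i) := rfl

lemma coeffDerivation_C (a : A) : coeffDerivation d (Polynomial.C a) = Polynomial.C (d a) := by
  ext i
  simp only [coeff_coeffDerivation, Polynomial.coeff_C]
  split_ifs <;> simp

lemma coeffDerivation_X : coeffDerivation d (Polynomial.X : Polynomial A) = 0 := by
  ext i
  simp only [coeff_coeffDerivation, Polynomial.coeff_X]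
  split_ifs <;> simp

end CoeffDerivation

section Flecnode

variable {K : Type*} [CommRing K] (f g : MvPolynomial (Fin 3) K)

/-- The derivation along the direction `(-f_x, 0, f_z)` in the coordinates `(z, y, x)`, which is
tangent to the surface `f = 0` and to the planes of constant `y`. -/
noncomputable def tangentDerivation : Derivation K (MvPolynomial (Fin 3) K)
    (MvPolynomial (Fin 3) K) :=
  pderiv 0 f • pderiv 2 - pderiv 2 f • pderiv 0

/-- The flecnode polynomial: it vanishes where the tangent line of constant `y` has contact of
order at least three with the surface `f = 0`, in particular along every blue line contained in
that surface. -/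
noncomputable def flecnode : MvPolynomial (Fin 3) K :=
  pderiv 2 f * tangentDerivation f (pderiv 0 f) - pderiv 0 f * tangentDerivation f (pderiv 2 f)

/-- Substitution of the point at parameter `T` of the tangent line of constant `y` through
`(z, y, x)`, that is, of `(z - T f_x, y, x + T f_z)`. -/
noncomputable def alongTangent : MvPolynomial (Fin 3) K →ₐ[K] Polynomial (MvPolynomial (Fin 3) K) :=
  aeval ![Polynomial.C (X 0) - Polynomial.C (pderiv 2 f) * Polynomial.X, Polynomial.C (X 1),
    Polynomial.C (X 2) + Polynomial.C (pderiv 0 f) * Polynomial.X]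

lemma tangentDerivation_apply :
    tangentDerivation f g = pderiv 0 f * pderiv 2 g - pderiv 2 f * pderiv 0 g := by
  simp [tangentDerivation]

lemma tangentDerivation_self : tangentDerivation f f = 0 := by
  rw [tangentDerivation_apply, mul_comm, sub_self]

lemma totalDegree_flecnode_le : (flecnode f).totalDegree ≤ 3 * f.totalDegree := by
  have first (i : Fin 3) : (pderiv i f).totalDegree ≤ f.totalDegree := totalDegree_pderiv_le i f
  have second (i j : Fin 3) : (pderiv i (pderiv j f)).totalDegree ≤ f.totalDegree :=
    (totalDegree_pderiv_le i _).trans (first j)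
  have tangent (j : Fin 3) :
      (tangentDerivation f (pderiv j f)).totalDegree ≤ f.totalDegree + f.totalDegree := by
    rw [tangentDerivation_apply]
    exact totalDegree_sub_le_of_le (totalDegree_mul_le_of_le (first _) (second _ _))
      (totalDegree_mul_le_of_le (first _) (second _ _))
  refine (totalDegree_sub_le_of_le (totalDegree_mul_le_of_le (first _) (tangent _))
    (totalDegree_mul_le_of_le (first _) (tangent _))).trans_eq (by ring)

lemma derivative_restrictBlue (b : Fin 3 → K) :
    Polynomial.derivative (restrictBlue b g) =
      restrictBlue b (pderiv 2 g) + Polynomial.C (b 1) * restrictBlue b (pderiv 0 g) := by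
  have chain := derivation_algHom_apply
    (Polynomial.derivative'.restrictScalars K) (restrictBlue b) g
  simp only [Fin.sum_univ_three, restrictBlue, aeval_X] at chain
  refine Eq.trans chain ?_
  simp only [restrictBlue, Derivation.restrictScalars_apply, Polynomial.derivative'_apply,
    Matrix.cons_val, Polynomial.derivative_add, Polynomial.derivative_mul,
    Polynomial.derivative_C, Polynomial.derivative_X]
  ring

variable {f} in
lemma restrictBlue_flecnode_eq_zero {b : Fin 3 → K} (hf : restrictBlue b f = 0) :
    restrictBlue b (flecnode f) = 0 := by
  have hfx : restrictBlue b (pderiv 2 f) =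
      -Polynomial.C (b 1) * restrictBlue b (pderiv 0 f) := by
    have h := derivative_restrictBlue f b
    rw [hf, Polynomial.derivative_zero] at h
    linear_combination -h
  have hz := derivative_restrictBlue (pderiv 0 f) b
  have hx := derivative_restrictBlue (pderiv 2 f) b
  simp only [hfx, neg_mul, map_neg, Polynomial.derivative_mul, Polynomial.derivative_C] at hx
  simp only [flecnode, tangentDerivation_apply, map_sub, map_mul, hfx]
  linear_combination (restrictBlue b (pderiv 0 f)) ^ 2 * (hx + Polynomial.C (b 1) * hz)

lemma derivative_alongTangent :
    Polynomial.derivative (alongTangent f g) =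
      Polynomial.C (pderiv 0 f) * alongTangent f (pderiv 2 g) -
        Polynomial.C (pderiv 2 f) * alongTangent f (pderiv 0 g) := by
  refine (derivation_algHom_apply (Polynomial.derivative'.restrictScalars K)
    (alongTangent f) g).trans ?_
  simp only [alongTangent, aeval_X, Derivation.restrictScalars_apply, Polynomial.derivative'_apply,
    Fin.sum_univ_three, Matrix.cons_val, Polynomial.derivative_sub, Polynomial.derivative_add,
    Polynomial.derivative_mul, Polynomial.derivative_C, Polynomial.derivative_X]
  ring

lemma C_mul_coeffDerivation_alongTangent :
    Polynomial.C (pderiv 0 f) * coeffDerivation (tangentDerivation f) (alongTangent f g) =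
      Polynomial.C (pderiv 0 f) * Polynomial.derivative (alongTangent f g) +
      Polynomial.X * (Polynomial.C (tangentDerivation f (pderiv 0 f)) *
        Polynomial.derivative (alongTangent f g) +
          Polynomial.C (flecnode f) * alongTangent f (pderiv 0 g)) := by
  have chain := derivation_algHom_apply (coeffDerivation (tangentDerivation f)) (alongTangent f) g
  have hz : alongTangent f (X 0) = Polynomial.C (X 0) - Polynomial.C (pderiv 2 f) * Polynomial.X :=
    aeval_X _ _
  have hy : alongTangent f (X 1) = Polynomial.C (X 1) := aeval_X _ _
  have hx : alongTangent f (X 2) = Polynomial.C (X 2) + Polynomial.C (pderiv 0 f) * Polynomial.X :=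
    aeval_X _ _
  have dz : tangentDerivation f (X 0) = -pderiv 2 f := by simp [tangentDerivation_apply, pderiv_X]
  have dy : tangentDerivation f (X 1) = 0 := by simp [tangentDerivation_apply, pderiv_X]
  have dx : tangentDerivation f (X 2) = pderiv 0 f := by simp [tangentDerivation_apply, pderiv_X]
  simp only [Fin.sum_univ_three, hz, hy, hx, map_sub, map_add, Derivation.leibniz,
    coeffDerivation_C, coeffDerivation_X, dz, dy, dx] at chain
  rw [chain, derivative_alongTangent, flecnode]
  simp only [map_neg, map_zero, map_sub, map_mul, smul_eq_mul]
  ring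

variable {f g}

lemma natDegree_alongTangent_le : (alongTangent f g).natDegree ≤ g.totalDegree := by
  rw [alongTangent, ← aeval_map_algebraMap (MvPolynomial (Fin 3) K)]
  have hmap : (map (algebraMap K (MvPolynomial (Fin 3) K)) g).totalDegree ≤ g.totalDegree :=
    Finset.sup_mono (support_map_subset _ g)
  refine (aeval_natDegree_le (n := 1) _ hmap _ fun i ↦ ?_).trans_eq (mul_one _)
  fin_cases i
  · change Polynomial.natDegree (Polynomial.C _ - Polynomial.C _ * Polynomial.X) ≤ 1
    compute_degree
  · exact (Polynomial.natDegree_C _).trans_le zero_le_one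
  · change Polynomial.natDegree (Polynomial.C _ + Polynomial.C _ * Polynomial.X) ≤ 1
    compute_degree

lemma coeff_zero_alongTangent : (alongTangent f g).coeff 0 = g := by
  have hom_eq : ((Polynomial.aeval (0 : MvPolynomial (Fin 3) K)).restrictScalars K).comp
      (alongTangent f) = AlgHom.id K _ := by
    refine MvPolynomial.algHom_ext fun i ↦ ?_
    fin_cases i <;> simp [alongTangent]
  rw [Polynomial.coeff_zero_eq_eval_zero, ← Polynomial.coe_aeval_eq_eval]
  exact congr($hom_eq g)

-- At a zero of `f` and of its flecnode polynomial, the identity above determines `(j + 1) f_z`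
-- times the coefficient of degree `j + 1` from the lower ones.
lemma dvd_coeff_alongTangent (hf : Prime f) (hfz : ¬ f ∣ pderiv 0 f) (hfl : f ∣ flecnode f)
    (hd : IsUnit (f.totalDegree.factorial : K)) (j : ℕ) : f ∣ (alongTangent f f).coeff j := by
  induction j with
  | zero => rw [coeff_zero_alongTangent]
  | succ j ih =>
    rcases lt_or_ge f.totalDegree (j + 1) with hj | hj
    · rw [Polynomial.coeff_eq_zero_of_natDegree_lt (natDegree_alongTangent_le.trans_lt hj)]
      exact dvd_zero f
    have hder : f ∣ tangentDerivation f ((alongTangent f f).coeff j) := by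
      obtain ⟨q, hq⟩ := ih
      rw [hq, Derivation.leibniz, tangentDerivation_self]
      simp
    have hlow : f ∣ (Polynomial.X * (Polynomial.C (tangentDerivation f (pderiv 0 f)) *
        Polynomial.derivative (alongTangent f f) +
          Polynomial.C (flecnode f) * alongTangent f (pderiv 0 f))).coeff j := by
      cases j with
      | zero => simp
      | succ i =>
        rw [Polynomial.coeff_X_mul, Polynomial.coeff_add, Polynomial.coeff_C_mul,
          Polynomial.coeff_C_mul, Polynomial.coeff_derivative]
        exact dvd_add ((ih.mul_right _).mul_left _) (hfl.mul_right _)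
    have hid := congr(Polynomial.coeff $(C_mul_coeffDerivation_alongTangent f f) j)
    simp only [Polynomial.coeff_add, Polynomial.coeff_C_mul, coeff_coeffDerivation,
      Polynomial.coeff_derivative] at hid
    have hprod : f ∣ pderiv 0 f *
        ((alongTangent f f).coeff (j + 1) * ((j : MvPolynomial (Fin 3) K) + 1)) := by
      rw [← sub_eq_of_eq_add hid]
      exact dvd_sub (hder.mul_left _) hlow
    have hunit : IsUnit ((j : MvPolynomial (Fin 3) K) + 1) := by
      have hK : IsUnit ((j + 1 : ℕ) : K) :=
        isUnit_of_dvd_unit (Nat.cast_dvd_cast (Nat.dvd_factorial j.succ_pos hj)) hd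
      simpa using hK.map (C : K →+* MvPolynomial (Fin 3) K)
    exact hunit.dvd_mul_right.1 ((hf.dvd_or_dvd hprod).resolve_left hfz)

end Flecnode

section Collinear

universe u

lemma exists_factor_through_localization {K F : Type*} {R : Type u} [CommRing K] [CommRing R]
    [CommRing F] [Algebra K R] [Algebra K F] {f u : R} (hf : Prime f) (hu : ¬ f ∣ u) (φ : R →ₐ[K] F)
    (hφf : φ f = 0) (hφu : IsUnit (φ u)) :
    ∃ (A : Type u) (_ : CommRing A) (_ : IsDomain A) (_ : Algebra K A) (π : R →ₐ[K] A)
      (ρ : A →ₐ[K] F), (∀ g, π g = 0 ↔ f ∣ g) ∧ IsUnit (π u) ∧ ρ.comp π = φ := by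
  let I : Ideal R := Ideal.span {f}
  have : I.IsPrime := (Ideal.span_singleton_prime hf.ne_zero).2 hf
  have hker (g : R) : Ideal.Quotient.mk I g = 0 ↔ f ∣ g := by
    rw [Ideal.Quotient.eq_zero_iff_mem, Ideal.mem_span_singleton]
  let v : R ⧸ I := Ideal.Quotient.mk I u
  have hv : Submonoid.powers v ≤ nonZeroDivisors (R ⧸ I) :=
    powers_le_nonZeroDivisors_of_noZeroDivisors (mt (hker u).1 hu)
  have hφI (a : R) (ha : a ∈ I) : φ a = 0 := by
    obtain ⟨b, rfl⟩ := Ideal.mem_span_singleton.1 ha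
    rw [map_mul, hφf, zero_mul]
  let ρ : Localization.Away v →ₐ[K] F := IsLocalization.liftAlgHom (M := Submonoid.powers v)
    (f := Ideal.Quotient.liftₐ I φ hφI) (by
      rintro ⟨_, n, rfl⟩
      rw [map_pow]
      exact hφu.pow n)
  refine ⟨Localization.Away v, inferInstance, IsLocalization.isDomain_localization hv,
    inferInstance, (IsScalarTower.toAlgHom K (R ⧸ I) (Localization.Away v)).comp
      (Ideal.Quotient.mkₐ K I), ρ, fun g ↦ ?_, ?_, ?_⟩
  · rw [← hker, ← map_eq_zero_iff _ (IsLocalization.injective (Localization.Away v) hv)]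
    rfl
  · exact IsLocalization.Away.algebraMap_isUnit v
  · ext g
    exact IsLocalization.lift_eq _ _

lemma eq_of_isRoot_of_map_eq {A B : Type*} [CommRing A] [IsDomain A] [CommRing B] (ρ : A →+* B)
    {g : Polynomial A} {a c : A} (ha : g.IsRoot a) (hc : g.IsRoot c) (hac : ρ a = ρ c)
    (hderiv : ρ (g.derivative.eval c) ≠ 0) : a = c := by
  obtain ⟨k, hk⟩ := Polynomial.binomExpansion g c (a - c)
  rw [add_sub_cancel, ha.eq_zero, hc.eq_zero] at hk
  have hprod : (g.derivative.eval c + k * (a - c)) * (a - c) = 0 := by linear_combination -hk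
  refine sub_eq_zero.1 ((mul_eq_zero.1 hprod).resolve_left fun h ↦ hderiv ?_)
  simpa [hac] using congr(ρ $h)

variable {K : Type*} [Field K] {f : MvPolynomial (Fin 3) K}

lemma aeval_along_z {A : Type*} [CommRing A] [Algebra K A] (y x s : A)
    (q : MvPolynomial (Fin 3) K) :
    (aeval ![Polynomial.X, Polynomial.C y, Polynomial.C x] q).eval s = aeval ![s, y, x] q := by
  have hom_eq : ((Polynomial.aeval s).restrictScalars K).comp
      (aeval ![Polynomial.X, Polynomial.C y, Polynomial.C x]) =
        (aeval ![s, y, x] : MvPolynomial (Fin 3) K →ₐ[K] A) := by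
    refine MvPolynomial.algHom_ext fun i ↦ ?_
    fin_cases i <;> simp
  simpa [Polynomial.coe_aeval_eq_eval] using congr($hom_eq q)

lemma derivative_aeval_along_z {A : Type*} [CommRing A] [Algebra K A] (y x : A)
    (q : MvPolynomial (Fin 3) K) :
    Polynomial.derivative (aeval ![Polynomial.X, Polynomial.C y, Polynomial.C x] q) =
      aeval ![Polynomial.X, Polynomial.C y, Polynomial.C x] (pderiv 0 q) := by
  refine (derivation_algHom_apply
    ((Polynomial.derivative' : Derivation A (Polynomial A) _).restrictScalars K) _ q).trans ?_
  simp [Fin.sum_univ_three]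

lemma aeval_restrictRed {A : Type*} [CommRing A] [Algebra K A] (r : Fin 3 → K) (y : A)
    (q : MvPolynomial (Fin 3) K) : Polynomial.aeval y (restrictRed r q) =
      aeval ![algebraMap K A (r 1) * y + algebraMap K A (r 2), y, algebraMap K A (r 0)] q := by
  have hom_eq : (Polynomial.aeval y).comp (restrictRed r) =
      aeval ![algebraMap K A (r 1) * y + algebraMap K A (r 2), y, algebraMap K A (r 0)] := by
    refine MvPolynomial.algHom_ext fun i ↦ ?_
    fin_cases i <;> simp [restrictRed]
  exact congr($hom_eq q)

lemma aeval_tangent_point_eq_zero {A : Type*} [CommRing A] [Algebra K A]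
    (π : MvPolynomial (Fin 3) K →ₐ[K] A) (hπ : ∀ j, π ((alongTangent f f).coeff j) = 0) (τ : A) :
    aeval ![π (X 0) - π (pderiv 2 f) * τ, π (X 1), π (X 2) + π (pderiv 0 f) * τ] f = 0 := by
  have hom_eq : aeval ![π (X 0) - π (pderiv 2 f) * τ, π (X 1), π (X 2) + π (pderiv 0 f) * τ] =
      ((Polynomial.aeval τ).restrictScalars K).comp
        ((Polynomial.mapAlgHom π).comp (alongTangent f)) := by
    refine MvPolynomial.algHom_ext fun i ↦ ?_
    fin_cases i <;> simp [alongTangent]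
  have hmap : Polynomial.mapAlgHom π (alongTangent f f) = 0 := by
    ext j
    simp [hπ]
  rw [hom_eq]
  simp only [AlgHom.comp_apply, hmap, map_zero]

-- Follow the tangent line of constant `y` until `x = r 0`. It stays in the surface `f = 0`, and on
-- the red line of `r` it starts at a simple root of `f` in `z`; so it ends on that red line.
lemma dvd_tangentPlane_of_restrictRed_eq_zero (hf : Prime f) (hfz : ¬ f ∣ pderiv 0 f)
    (htan : ∀ j, f ∣ (alongTangent f f).coeff j) {r : Fin 3 → K} (hr : restrictRed r f = 0)
    (hrz : restrictRed r (pderiv 0 f) ≠ 0) :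
    f ∣ pderiv 0 f * (X 0 - (C (r 1) * X 1 + C (r 2))) - pderiv 2 f * (C (r 0) - X 2) := by
  let ι := IsScalarTower.toAlgHom K (Polynomial K) (FractionRing (Polynomial K))
  have hι : Function.Injective ι := IsFractionRing.injective (Polynomial K) _
  obtain ⟨A, _, _, _, π, ρ, hπ, ⟨u, hu⟩, hρ⟩ := exists_factor_through_localization hf hfz
    (ι.comp (restrictRed r)) (by simp [hr]) (by simpa [hι.ne_iff' (map_zero ι)] using hrz)
  have hρπ (q) : ρ (π q) = ι (restrictRed r q) := congr($hρ q)
  set τ : A := (algebraMap K A (r 0) - π (X 2)) * ↑u⁻¹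
  have hτ : π (pderiv 0 f) * τ = algebraMap K A (r 0) - π (X 2) := by
    rw [← hu, mul_left_comm, Units.mul_inv, mul_one]
  have hιC (a : K) : ι (Polynomial.C a) = algebraMap K _ a := ι.commutes a
  have hρτ : ρ τ = 0 := by simp [τ, hρπ, restrictRed, hιC]
  set ζ : A := π (X 0) - π (pderiv 2 f) * τ
  set c : A := algebraMap K A (r 1) * π (X 1) + algebraMap K A (r 2)
  set g : MvPolynomial (Fin 3) K →ₐ[K] Polynomial A :=
    aeval ![Polynomial.X, Polynomial.C (π (X 1)), Polynomial.C (algebraMap K A (r 0))]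
  have hζ : (g f).IsRoot ζ := by
    rw [Polynomial.IsRoot, aeval_along_z, ← sub_add_cancel (algebraMap K A (r 0)) (π (X 2)), ← hτ,
      add_comm _ (π (X 2))]
    exact aeval_tangent_point_eq_zero π (fun j ↦ (hπ _).2 (htan j)) τ
  have hgc (q) : (g q).eval c = Polynomial.aeval (π (X 1)) (restrictRed r q) := by
    rw [aeval_along_z, aeval_restrictRed]
  have hρy : ρ (π (X 1)) = ι Polynomial.X := by simp [hρπ, restrictRed]
  have hζc : ζ = c := by
    refine eq_of_isRoot_of_map_eq ρ.toRingHom hζ (by simp [Polynomial.IsRoot, hgc, hr]) ?_ ?_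
    · simp [ζ, c, hρτ, hρπ, restrictRed, hιC]
    · rw [derivative_aeval_along_z, hgc]
      have hρaeval (P : Polynomial K) : ρ (Polynomial.aeval (π (X 1)) P) = ι P := by
        rw [← Polynomial.aeval_algHom_apply, hρy, Polynomial.aeval_algHom_apply,
          Polynomial.aeval_X_left_apply]
      exact (hρaeval _).trans_ne ((map_ne_zero_iff ι hι).2 hrz)
  have hC (a : K) : π (C a) = algebraMap K A a := π.commutes a
  rw [← hπ]
  simp only [map_sub, map_mul, map_add, hC]
  linear_combination π (pderiv 0 f) * hζc + π (pderiv 2 f) * hτ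

lemma eq_zero_of_dvd_pderiv_mul_linear (hf : Prime f) (hfz : ¬ f ∣ pderiv 0 f) {r : Fin 3 → K}
    (hr : restrictRed r f = 0) {v w : K} (h : f ∣ pderiv 0 f * (C v * X 1 + C w)) :
    v = 0 ∧ w = 0 := by
  have hlin := map_dvd (restrictRed r) ((hf.dvd_or_dvd h).resolve_left hfz)
  rw [hr, zero_dvd_iff] at hlin
  have hlin' : Polynomial.C v * Polynomial.X + Polynomial.C w = 0 := by
    simpa [restrictRed] using hlin
  exact ⟨by simpa using congr(Polynomial.coeff $hlin' 1),
    by simpa using congr(Polynomial.coeff $hlin' 0)⟩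

lemma collinear_of_cross_eq {ι : Type*} {S : Set (ι → K)} {r r' : ι → K} (hr : r ∈ S) {i₀ : ι}
    (h0 : r' i₀ - r i₀ ≠ 0)
    (h : ∀ q ∈ S, ∀ i, (q i - r i) * (r' i₀ - r i₀) = (q i₀ - r i₀) * (r' i - r i)) :
    Collinear K S := by
  refine (collinear_iff_of_mem hr).2
    ⟨r' - r, fun q hq ↦ ⟨(q i₀ - r i₀) / (r' i₀ - r i₀), funext fun i ↦ ?_⟩⟩
  rw [vadd_eq_add, Pi.add_apply, Pi.smul_apply, Pi.sub_apply, smul_eq_mul, ← sub_eq_iff_eq_add,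
    div_mul_eq_mul_div, eq_div_iff h0]
  exact h q hq i

lemma collinear_of_restrictRed_eq_zero (hf : Prime f) (hfz : ¬ f ∣ pderiv 0 f)
    (htan : ∀ j, f ∣ (alongTangent f f).coeff j) {S : Set (Fin 3 → K)}
    (hS : ∀ r ∈ S, restrictRed r f = 0) (hSz : ∀ r ∈ S, restrictRed r (pderiv 0 f) ≠ 0) :
    Collinear K S := by
  rcases S.subsingleton_or_nontrivial with hsub | ⟨r, hr, r', hr', hne⟩
  · rcases hsub.eq_empty_or_singleton with rfl | ⟨r, rfl⟩
    exacts [collinear_empty K _, collinear_singleton K r]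
  have tangent_sub (q) (hq : q ∈ S) : f ∣ pderiv 0 f * (C (q 1 - r 1) * X 1 + C (q 2 - r 2)) +
      pderiv 2 f * C (q 0 - r 0) := by
    convert (dvd_tangentPlane_of_restrictRed_eq_zero hf hfz htan (hS r hr) (hSz r hr)).sub
      (dvd_tangentPlane_of_restrictRed_eq_zero hf hfz htan (hS q hq) (hSz q hq)) using 1
    simp only [map_sub]
    ring
  have h0 : r' 0 - r 0 ≠ 0 := fun h0 ↦ by
    obtain ⟨h₁, h₂⟩ := eq_zero_of_dvd_pderiv_mul_linear hf hfz (hS r hr)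
      (by simpa only [h0, map_zero, mul_zero, add_zero] using tangent_sub r' hr')
    refine hne (funext fun i ↦ (sub_eq_zero.1 ?_).symm)
    fin_cases i
    exacts [h0, h₁, h₂]
  refine collinear_of_cross_eq hr h0 fun q hq ↦ ?_
  obtain ⟨h₁, h₂⟩ := eq_zero_of_dvd_pderiv_mul_linear hf hfz (hS r hr)
    (v := (q 1 - r 1) * (r' 0 - r 0) - (q 0 - r 0) * (r' 1 - r 1))
    (w := (q 2 - r 2) * (r' 0 - r 0) - (q 0 - r 0) * (r' 2 - r 2)) (by
      convert ((tangent_sub q hq).mul_left (C (r' 0 - r 0))).sub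
        ((tangent_sub r' hr').mul_left (C (q 0 - r 0))) using 1
      simp only [map_sub, map_mul]
      ring)
  intro i
  fin_cases i
  exacts [rfl, sub_eq_zero.1 h₁, sub_eq_zero.1 h₂]

end Collinear

section Factors

lemma exists_irreducible_factors {σ K : Type*} [Field K] {F : MvPolynomial σ K} (hF : F ≠ 0) :
    ∃ S : Finset (MvPolynomial σ K), (∀ f ∈ S, Irreducible f) ∧
      (∀ f ∈ S, ∀ g ∈ S, f ∣ g → f = g) ∧ ∏ f ∈ S, f ∣ F ∧ ∃ n, F ∣ (∏ f ∈ S, f) ^ n := by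
  classical
  obtain ⟨_⟩ : Nonempty (NormalizationMonoid (MvPolynomial σ K)) := inferInstance
  have irreducible_of_mem : ∀ f ∈ UniqueFactorizationMonoid.primeFactors F, Irreducible f :=
    fun f hf ↦ UniqueFactorizationMonoid.irreducible_of_normalized_factor f
      (UniqueFactorizationMonoid.mem_primeFactors.1 hf)
  refine ⟨UniqueFactorizationMonoid.primeFactors F, irreducible_of_mem, fun f hf g hg hfg ↦ ?_,
    UniqueFactorizationMonoid.radical_dvd_self,
    UniqueFactorizationMonoid.exists_dvd_radical_self_pow hF⟩
  by_contra hne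
  exact (irreducible_of_mem f hf).not_isUnit
    (UniqueFactorizationMonoid.pairwise_primeFactors_isRelPrime hf hg hne dvd_rfl hfg)

lemma exists_mem_eq_zero_of_dvd_prod_pow {ι R R' : Type*} [CommRing R] [CommRing R']
    [IsDomain R'] (φ : R →+* R') {F : R} {S : Finset ι} {f : ι → R} {n : ℕ}
    (hF : F ∣ (∏ i ∈ S, f i) ^ n) (hφ : φ F = 0) : ∃ i ∈ S, φ (f i) = 0 := by
  have hprod : φ ((∏ i ∈ S, f i) ^ n) = 0 := zero_dvd_iff.1 (hφ ▸ map_dvd φ hF)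
  rw [map_pow, map_prod] at hprod
  exact Finset.prod_eq_zero_iff.1 (eq_zero_of_pow_eq_zero hprod)

lemma totalDegree_prod_of_ne_zero {ι σ K : Type*} [CommRing K] [IsDomain K] (S : Finset ι)
    {f : ι → MvPolynomial σ K} (hf : ∀ i ∈ S, f i ≠ 0) :
    (∏ i ∈ S, f i).totalDegree = ∑ i ∈ S, (f i).totalDegree := by
  classical
  induction S using Finset.induction_on with
  | empty => simp
  | insert i S hi ih =>
    have hS : ∀ j ∈ S, f j ≠ 0 := fun j hj ↦ hf j (Finset.mem_insert_of_mem hj)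
    rw [Finset.prod_insert hi, Finset.sum_insert hi, ← ih hS, totalDegree_mul_of_isDomain
      (hf i (Finset.mem_insert_self i S)) (Finset.prod_ne_zero_iff.2 hS)]

end Factors

section RichPlanes

variable {K : Type*} [Field K] {f g : MvPolynomial (Fin 3) K} {d k : ℕ}
  {R Q : Finset (Fin 3 → K)}

/-- Every collinear subset of `P` has at most `k` points. -/
def CollinearCardLE {V : Type*} (K : Type*) [DivisionRing K] [AddCommGroup V] [Module K V]
    (P : Finset V) (k : ℕ) : Prop :=
  ∀ T ⊆ P, Collinear K (T : Set V) → T.card ≤ k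

lemma card_exceptional_le (hf : Irreducible f) (hfg : ¬ f ∣ g)
    (hd : (f.totalDegree.factorial : K) ≠ 0) (hfd : f.totalDegree ≤ d)
    (hgd : (pderiv 0 f * g).totalDegree ≤ d) (hQ : Set.InjOn (fun b : Fin 3 → K ↦ b 0) Q)
    (hQf : ∀ b ∈ Q, restrictBlue b f = 0)
    (hexc : f ∣ flecnode f → ¬ f ∣ pderiv 0 f → ∀ b ∈ Q, restrictBlue b (pderiv 0 f * g) = 0) :
    Q.card ≤ f.totalDegree * (6 * d + 1) := by
  by_cases hfz : f ∣ pderiv 0 f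
  · exact (card_le_totalDegree_of_dvd_pderiv_zero hd hf.ne_zero hfz hQ hQf).trans
      (Nat.le_mul_of_pos_right _ (by positivity))
  by_cases hfl : f ∣ flecnode f
  · have hndvd : ¬ f ∣ pderiv 0 f * g := fun h ↦ (hf.prime.dvd_or_dvd h).elim hfz hfg
    have bezout := card_le_of_irreducible_of_not_dvd hf hndvd hQ hQf (hexc hfl hfz)
    nlinarith [Nat.mul_le_mul_left f.totalDegree hgd]
  · have bezout := card_le_of_irreducible_of_not_dvd hf hfl hQ hQf
      fun b hb ↦ restrictBlue_flecnode_eq_zero (hQf b hb)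
    nlinarith [Nat.mul_le_mul_left f.totalDegree (totalDegree_flecnode_le f),
      Nat.mul_le_mul_left f.totalDegree hfd]

open Classical in
lemma card_meets_le_of_dvd_flecnode (hf : Prime f) (hfl : f ∣ flecnode f)
    (hfz : ¬ f ∣ pderiv 0 f) (hd : (f.totalDegree.factorial : K) ≠ 0)
    (hR : Set.InjOn (fun r : Fin 3 → K ↦ r 0) R) (hRk : CollinearCardLE K R k)
    (hRfg : ∀ r ∈ R, restrictRed r (f * g) = 0) {b : Fin 3 → K}
    (hb : restrictBlue b (pderiv 0 f * g) ≠ 0) :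
    (R.filter (Meets · b)).card ≤ (pderiv 0 f * g).totalDegree + k := by
  rw [← Finset.card_filter_add_card_filter_not (fun r ↦ restrictRed r (pderiv 0 f * g) = 0)]
  gcongr
  · refine card_le_totalDegree_of_meets hb (hR.mono fun r hr ↦ ?_) (fun r hr ↦ ?_) fun r hr ↦ ?_
    · exact (Finset.mem_filter.1 (Finset.mem_filter.1 hr).1).1
    · exact (Finset.mem_filter.1 (Finset.mem_filter.1 hr).1).2
    · exact (Finset.mem_filter.1 hr).2
  · refine hRk _ ((Finset.filter_subset _ _).trans (Finset.filter_subset _ _)) ?_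
    have ne_zero : ∀ r ∈ (R.filter (Meets · b)).filter
        (fun r ↦ ¬ restrictRed r (pderiv 0 f * g) = 0),
        restrictRed r (pderiv 0 f) ≠ 0 ∧ restrictRed r g ≠ 0 := fun r hr ↦
      mul_ne_zero_iff.1 (by simpa only [map_mul] using (Finset.mem_filter.1 hr).2)
    refine collinear_of_restrictRed_eq_zero hf hfz
      (dvd_coeff_alongTangent hf hfz hfl (isUnit_iff_ne_zero.2 hd)) (fun r hr ↦ ?_)
      fun r hr ↦ (ne_zero r hr).1
    have hfg := hRfg r (Finset.mem_filter.1 (Finset.mem_filter.1 hr).1).1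
    rw [map_mul] at hfg
    exact (mul_eq_zero.1 hfg).resolve_right (ne_zero r hr).2

lemma natCast_factorial_ne_zero_of_le {S : Type*} [Semiring S] {m n : ℕ} (hmn : m ≤ n)
    (hn : (n.factorial : S) ≠ 0) : (m.factorial : S) ≠ 0 := fun hm ↦
  hn (zero_dvd_iff.1 (hm ▸ Nat.cast_dvd_cast (Nat.factorial_dvd_factorial hmn)))

lemma totalDegree_pderiv_mul_le (i : Fin 3) (hfg : f * g ≠ 0) :
    (pderiv i f * g).totalDegree ≤ (f * g).totalDegree := by
  rw [totalDegree_mul_of_isDomain (left_ne_zero_of_mul hfg) (right_ne_zero_of_mul hfg)]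
  exact totalDegree_mul_le_of_le (totalDegree_pderiv_le i f) le_rfl

open Classical in
lemma card_rich_on_factor_le (hf : Irreducible f) (hfg : ¬ f ∣ g) (hfg0 : f * g ≠ 0)
    (hd : ((f * g).totalDegree.factorial : K) ≠ 0)
    (hR : Set.InjOn (fun r : Fin 3 → K ↦ r 0) R) (hRk : CollinearCardLE K R k)
    (hRfg : ∀ r ∈ R, restrictRed r (f * g) = 0) (hQ : Set.InjOn (fun b : Fin 3 → K ↦ b 0) Q)
    (hQf : ∀ b ∈ Q, restrictBlue b f = 0)
    (hrich : ∀ b ∈ Q, (f * g).totalDegree + k < (R.filter (Meets · b)).card) :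
    Q.card ≤ f.totalDegree * (6 * (f * g).totalDegree + 1) := by
  have hfd := totalDegree_le_of_dvd_of_isDomain (dvd_mul_right f g) hfg0
  have hd' := natCast_factorial_ne_zero_of_le hfd hd
  have hgd := totalDegree_pderiv_mul_le 0 hfg0
  refine card_exceptional_le hf hfg hd' hfd hgd hQ hQf fun hfl hfz b hb ↦ ?_
  by_contra hne
  have := card_meets_le_of_dvd_flecnode hf.prime hfl hfz hd' hR hRk hRfg hne
  have := hrich b hb
  omega

open Classical in
lemma card_rich_on_irreducible_factor_le {S : Finset (MvPolynomial (Fin 3) K)}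
    (hirr : ∀ f ∈ S, Irreducible f) (hdistinct : ∀ f ∈ S, ∀ g ∈ S, f ∣ g → f = g)
    (hd : ((∏ g ∈ S, g).totalDegree.factorial : K) ≠ 0)
    (hR : Set.InjOn (fun r : Fin 3 → K ↦ r 0) R) (hRk : CollinearCardLE K R k)
    (hRS : ∀ r ∈ R, restrictRed r (∏ g ∈ S, g) = 0)
    (hQ : Set.InjOn (fun b : Fin 3 → K ↦ b 0) Q)
    (hrich : ∀ b ∈ Q, (∏ g ∈ S, g).totalDegree + k < (R.filter (Meets · b)).card)
    (hf : f ∈ S) (hQf : ∀ b ∈ Q, restrictBlue b f = 0) :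
    Q.card ≤ f.totalDegree * (6 * (∏ g ∈ S, g).totalDegree + 1) := by
  have not_dvd : ¬ f ∣ ∏ g ∈ S.erase f, g := fun hdvd ↦ by
    obtain ⟨g, hg, hfg⟩ := ((hirr f hf).prime.dvd_finsetProd_iff _).1 hdvd
    exact Finset.ne_of_mem_erase hg (hdistinct f hf g (Finset.mem_of_mem_erase hg) hfg).symm
  have prod_ne_zero : ∏ g ∈ S, g ≠ 0 := Finset.prod_ne_zero_iff.2 fun g hg ↦ (hirr g hg).ne_zero
  have prod_eq : f * ∏ g ∈ S.erase f, g = ∏ g ∈ S, g := Finset.mul_prod_erase S id hf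
  rw [← prod_eq] at prod_ne_zero hd hRS hrich ⊢
  exact card_rich_on_factor_le (hirr f hf) not_dvd prod_ne_zero hd hR hRk hRS hQ hQf hrich

open Classical in
lemma card_rich_le_of_vanishing {F : MvPolynomial (Fin 3) K} (hF : F ≠ 0)
    (hd : (F.totalDegree.factorial : K) ≠ 0)
    (hR : Set.InjOn (fun r : Fin 3 → K ↦ r 0) R) (hRk : CollinearCardLE K R k)
    (hRF : ∀ r ∈ R, restrictRed r F = 0) (hQ : Set.InjOn (fun b : Fin 3 → K ↦ b 0) Q)
    (hrich : ∀ b ∈ Q, F.totalDegree + k < (R.filter (Meets · b)).card) :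
    Q.card ≤ F.totalDegree * (6 * F.totalDegree + 1) := by
  obtain ⟨S, hirr, hdistinct, hSF, n, hFS⟩ := exists_irreducible_factors hF
  have hSd : (∏ g ∈ S, g).totalDegree ≤ F.totalDegree := totalDegree_le_of_dvd_of_isDomain hSF hF
  have vanishes_on_R : ∀ r ∈ R, restrictRed r (∏ g ∈ S, g) = 0 := fun r hr ↦ by
    have hpow := map_dvd (restrictRed r) hFS
    rw [hRF r hr, zero_dvd_iff, map_pow] at hpow
    exact eq_zero_of_pow_eq_zero hpow
  have card_on_factor_le : ∀ f ∈ S, (Q.filter fun b ↦ restrictBlue b f = 0).card ≤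
      f.totalDegree * (6 * F.totalDegree + 1) := fun f hf ↦
    (card_rich_on_irreducible_factor_le hirr hdistinct (natCast_factorial_ne_zero_of_le hSd hd) hR
      hRk vanishes_on_R (hQ.mono (Finset.coe_subset.2 (Finset.filter_subset _ _)))
      (fun b hb ↦ (Nat.add_le_add_right hSd k).trans_lt (hrich b (Finset.mem_filter.1 hb).1)) hf
      fun b hb ↦ (Finset.mem_filter.1 hb).2).trans (by gcongr)
  have covered : Q ⊆ S.biUnion fun f ↦ Q.filter fun b ↦ restrictBlue b f = 0 := by
    intro b hb
    have hbF : restrictBlue b F = 0 := by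
      by_contra hne
      have := card_le_totalDegree_of_meets hne (T := R.filter (Meets · b))
        (hR.mono (Finset.coe_subset.2 (Finset.filter_subset _ _)))
        (fun r hr ↦ (Finset.mem_filter.1 hr).2) fun r hr ↦ hRF r (Finset.mem_filter.1 hr).1
      have := hrich b hb
      omega
    obtain ⟨f, hf, hbf⟩ := exists_mem_eq_zero_of_dvd_prod_pow (restrictBlue b).toRingHom hFS hbF
    exact Finset.mem_biUnion.2 ⟨f, hf, Finset.mem_filter.2 ⟨hb, hbf⟩⟩
  calc Q.card ≤ ∑ f ∈ S, f.totalDegree * (6 * F.totalDegree + 1) :=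
        (Finset.card_le_card covered).trans
          (Finset.card_biUnion_le.trans (Finset.sum_le_sum card_on_factor_le))
    _ = (∏ f ∈ S, f).totalDegree * (6 * F.totalDegree + 1) := by
        rw [← Finset.sum_mul, totalDegree_prod_of_ne_zero S fun f hf ↦ (hirr f hf).ne_zero]
    _ ≤ F.totalDegree * (6 * F.totalDegree + 1) := by gcongr

end RichPlanes

section VanishingPolynomial

lemma finrank_restrictDegree (σ K : Type*) [Fintype σ] [Field K] (m : ℕ) :
    Module.finrank K (restrictDegree σ K m) = (m + 1) ^ Fintype.card σ := by
  have box_equiv : {s : σ →₀ ℕ | ∀ i, s i ≤ m} ≃ (σ → Set.Iic m) :=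
    (Finsupp.equivFunOnFinite.subtypeEquiv fun _ ↦ Iff.rfl).trans
      (Equiv.subtypePiEquivPi (p := fun _ n ↦ n ≤ m))
  calc Module.finrank K (restrictDegree σ K m) = Nat.card {s : σ →₀ ℕ | ∀ i, s i ≤ m} :=
        Module.finrank_eq_nat_card_basis (basisRestrictSupport K _)
    _ = (m + 1) ^ Fintype.card σ := by simp [Nat.card_congr box_equiv, Nat.card_pi]

lemma totalDegree_le_of_mem_restrictDegree {σ K : Type*} [Fintype σ] [CommSemiring K] {m : ℕ}
    {f : MvPolynomial σ K} (hf : f ∈ restrictDegree σ K m) :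
    f.totalDegree ≤ Fintype.card σ * m := by
  refine Finset.sup_le fun s hs ↦ ?_
  rw [Finsupp.sum_fintype _ _ fun _ ↦ rfl]
  simpa using Finset.sum_le_card_nsmul Finset.univ s m
    fun i _ ↦ (mem_restrictDegree σ f m).1 hf s hs i

lemma exists_ne_zero_forall_eq_zero {ι σ K : Type*} [Fintype σ] [Field K]
    {Φ : ι → MvPolynomial σ K →ₗ[K] Polynomial K}
    (hΦ : ∀ i f, (Φ i f).natDegree ≤ f.totalDegree) {S : Finset ι} {m : ℕ}
    (hm : S.card * (Fintype.card σ * m + 1) < (m + 1) ^ Fintype.card σ) :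
    ∃ F, F ≠ 0 ∧ F.totalDegree ≤ Fintype.card σ * m ∧ ∀ i ∈ S, Φ i F = 0 := by
  let L : restrictDegree σ K m →ₗ[K] S × Fin (Fintype.card σ * m + 1) → K :=
    LinearMap.pi fun q ↦ Polynomial.lcoeff K q.2 ∘ₗ Φ q.1 ∘ₗ (restrictDegree σ K m).subtype
  have hL : LinearMap.ker L ≠ ⊥ := by
    apply LinearMap.ker_ne_bot_of_finrank_lt
    simpa [finrank_restrictDegree] using hm
  obtain ⟨F, hFL, hF⟩ := Submodule.exists_mem_ne_zero_of_ne_bot hL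
  have hFm := totalDegree_le_of_mem_restrictDegree F.2
  refine ⟨F, by simpa using hF, hFm, fun i hi ↦ Polynomial.ext fun j ↦ ?_⟩
  rcases lt_or_ge j (Fintype.card σ * m + 1) with hj | hj
  · exact congrFun (LinearMap.mem_ker.1 hFL) (⟨i, hi⟩, ⟨j, hj⟩)
  · exact Polynomial.coeff_eq_zero_of_natDegree_lt (((hΦ i F).trans hFm).trans_lt hj)

open Classical in
lemma card_rich_le_of_injOn {K : Type*} [Field K] {P Q : Finset (Fin 3 → K)} {k m : ℕ}
    (hm : 3 * P.card ≤ (m + 1) ^ 2) (hd : ((3 * m).factorial : K) ≠ 0)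
    (hP : Set.InjOn (fun r : Fin 3 → K ↦ r 0) P) (hPk : CollinearCardLE K P k)
    (hQ : Set.InjOn (fun b : Fin 3 → K ↦ b 0) Q)
    (hrich : ∀ b ∈ Q, 3 * m + k < (P.filter (Meets · b)).card) :
    Q.card ≤ 57 * m ^ 2 := by
  have unknowns_gt : P.card * (Fintype.card (Fin 3) * m + 1) < (m + 1) ^ Fintype.card (Fin 3) := by
    rw [Fintype.card_fin]
    nlinarith [Nat.mul_le_mul_right (m + 1) hm]
  obtain ⟨F, hF, hFm, hPF⟩ := exists_ne_zero_forall_eq_zero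
    (Φ := fun r : Fin 3 → K ↦ (restrictRed r).toLinearMap) natDegree_restrictRed_le unknowns_gt
  rw [Fintype.card_fin] at hFm
  have card_le := card_rich_le_of_vanishing hF (natCast_factorial_ne_zero_of_le hFm hd) hP hPk
    hPF hQ fun b hb ↦ (Nat.add_le_add_right hFm k).trans_lt (hrich b hb)
  calc Q.card ≤ 3 * m * (6 * (3 * m) + 1) := card_le.trans (by gcongr)
    _ = 54 * m ^ 2 + 3 * m := by ring
    _ ≤ 57 * m ^ 2 := by linarith [Nat.le_self_pow two_ne_zero m]

end VanishingPolynomial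

section ProjectiveShear

variable {R K : Type*} [CommRing R] [Field K]

/-- Numerator of the first coordinate of `projShear`. -/
def shearNum (s : Fin 4 → R) (r : Fin 3 → R) : R := r 0 - s 0 * r 1 - s 1 * r 2

/-- Common denominator of the coordinates of `projShear`. -/
def shearDen (s : Fin 4 → R) (r : Fin 3 → R) : R := 1 - s 2 * r 1 - s 3 * r 2

/-- A projective transformation of 3-space. If points move by `projShear s`, then the planes
encoded by `Meets` move by `projShear (s ∘ Equiv.swap 1 2)`. -/
def projShear (s : Fin 4 → K) (r : Fin 3 → K) : Fin 3 → K :=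
  ![shearNum s r / shearDen s r, r 1 / shearDen s r, r 2 / shearDen s r]

lemma meets_projShear_iff {s : Fin 4 → K} {r b : Fin 3 → K} (hr : shearDen s r ≠ 0)
    (hb : shearDen (s ∘ Equiv.swap 1 2) b ≠ 0) :
    Meets (projShear s r) (projShear (s ∘ Equiv.swap 1 2) b) ↔ Meets r b := by
  have swap_zero : Equiv.swap (1 : Fin 4) 2 0 = 0 := rfl
  have swap_three : Equiv.swap (1 : Fin 4) 2 3 = 3 := rfl
  have defect : r 1 / shearDen s r * (shearNum (s ∘ Equiv.swap 1 2) b /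
      shearDen (s ∘ Equiv.swap 1 2) b) + r 2 / shearDen s r -
      (b 1 / shearDen (s ∘ Equiv.swap 1 2) b * (shearNum s r / shearDen s r) +
        b 2 / shearDen (s ∘ Equiv.swap 1 2) b) =
      (r 1 * b 0 + r 2 - (b 1 * r 0 + b 2)) /
        (shearDen s r * shearDen (s ∘ Equiv.swap 1 2) b) := by
    field_simp
    simp only [shearNum, shearDen, Function.comp_apply, Equiv.swap_apply_left,
      Equiv.swap_apply_right, swap_zero, swap_three]
    ring
  simp only [Meets, projShear, Matrix.cons_val]
  rw [← sub_eq_zero, defect, div_eq_zero_iff, or_iff_left (mul_ne_zero hr hb), sub_eq_zero]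

lemma shearDen_projShear {s : Fin 4 → K} {r : Fin 3 → K} (hr : shearDen s r ≠ 0) :
    shearDen (-s) (projShear s r) = (shearDen s r)⁻¹ := by
  simp only [shearDen, projShear, Matrix.cons_val, Pi.neg_apply]
  rw [shearDen] at hr
  field_simp
  ring

lemma projShear_neg_projShear {s : Fin 4 → K} {r : Fin 3 → K} (hr : shearDen s r ≠ 0) :
    projShear (-s) (projShear s r) = r := by
  rw [projShear, shearDen_projShear hr]
  ext i
  fin_cases i <;>
    simp only [shearNum, projShear, Pi.neg_apply, Matrix.cons_val, Fin.zero_eta, Fin.mk_one,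
      Fin.reduceFinMk] <;>
    field_simp
  ring

lemma collinear_image_projShear {s : Fin 4 → K} {T : Set (Fin 3 → K)} (hT : Collinear K T)
    (hden : ∀ r ∈ T, shearDen s r ≠ 0) : Collinear K (projShear s '' T) := by
  obtain rfl | ⟨p, hp⟩ := T.eq_empty_or_nonempty
  · simp [collinear_empty]
  obtain ⟨v, hv⟩ := (collinear_iff_of_mem hp).1 hT
  obtain ⟨α, hα⟩ : ∃ α, α = s 2 * v 1 + s 3 * v 2 := ⟨_, rfl⟩
  let w : Fin 3 → K := shearDen s p • ![v 0 - s 0 * v 1 - s 1 * v 2, v 1, v 2] +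
    α • ![shearNum s p, p 1, p 2]
  refine (collinear_iff_of_mem (Set.mem_image_of_mem _ hp)).2 ⟨w, ?_⟩
  rintro _ ⟨r, hr, rfl⟩
  obtain ⟨c, rfl⟩ := hv r hr
  rw [vadd_eq_add] at hr ⊢
  refine ⟨c / (shearDen s (c • v + p) * shearDen s p), ?_⟩
  have hp' := hden p hp
  have hr' := hden _ hr
  have num_eq : shearNum s (c • v + p) =
      shearNum s p + c * (v 0 - s 0 * v 1 - s 1 * v 2) := by
    simp only [shearNum, Pi.add_apply, Pi.smul_apply, smul_eq_mul]
    ring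
  have den_eq : shearDen s (c • v + p) = shearDen s p - c * α := by
    simp only [shearDen, hα, Pi.add_apply, Pi.smul_apply, smul_eq_mul]
    ring
  rw [den_eq] at hr' ⊢
  ext i
  fin_cases i <;>
    simp only [projShear, num_eq, den_eq, w, Pi.add_apply, Pi.smul_apply, smul_eq_mul,
      Matrix.cons_val, vadd_eq_add, Fin.zero_eta, Fin.mk_one, Fin.reduceFinMk] <;>
    field_simp <;>
    ring

lemma CollinearCardLE.image_projShear [DecidableEq K] {s : Fin 4 → K} {P : Finset (Fin 3 → K)}
    {k : ℕ} (hP : CollinearCardLE K P k) (hden : ∀ r ∈ P, shearDen s r ≠ 0) :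
    CollinearCardLE K (P.image (projShear s)) k := by
  intro T hT hcol
  obtain ⟨T, hTP, rfl⟩ := Finset.subset_image_iff.1 hT
  refine Finset.card_image_le.trans (hP T hTP ?_)
  have hden' : ∀ r ∈ projShear s '' (T : Set (Fin 3 → K)), shearDen (-s) r ≠ 0 := by
    rintro _ ⟨r, hr, rfl⟩
    rw [shearDen_projShear (hden r (hTP hr))]
    exact inv_ne_zero (hden r (hTP hr))
  have image_image : projShear (-s) '' (projShear s '' T) = T := by
    rw [Set.image_image]
    exact (Set.image_congr fun r hr ↦ projShear_neg_projShear (hden r (hTP hr))).trans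
      (Set.image_id' _)
  rw [Finset.coe_image] at hcol
  exact image_image ▸ collinear_image_projShear hcol hden'

open Classical in
/-- The polynomial in the parameters of a shear whose nonvanishing ensures that the shear is
defined on `P` and separates the first coordinates of the points of `P`. -/
noncomputable def shearDiscr (P : Finset (Fin 3 → K)) : MvPolynomial (Fin 4) K :=
  (∏ r ∈ P, shearDen X (C ∘ r)) * ∏ q ∈ P.offDiag, (shearNum X (C ∘ q.1) * shearDen X (C ∘ q.2) -
    shearNum X (C ∘ q.2) * shearDen X (C ∘ q.1))

lemma eval_shearDen (s : Fin 4 → K) (r : Fin 3 → K) :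
    eval s (shearDen X (C ∘ r)) = shearDen s r := by
  simp [shearDen]

lemma eval_shearNum (s : Fin 4 → K) (r : Fin 3 → K) :
    eval s (shearNum X (C ∘ r)) = shearNum s r := by
  simp [shearNum]

lemma eval_shearDiscr_ne_zero_iff {s : Fin 4 → K} {P : Finset (Fin 3 → K)} :
    eval s (shearDiscr P) ≠ 0 ↔ (∀ r ∈ P, shearDen s r ≠ 0) ∧
      ∀ r ∈ P, ∀ r' ∈ P, r ≠ r' → shearNum s r * shearDen s r' ≠ shearNum s r' * shearDen s r := by
  simp only [shearDiscr, map_mul, map_prod, map_sub, eval_shearDen, eval_shearNum, mul_ne_zero_iff,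
    Finset.prod_ne_zero_iff, sub_ne_zero, Finset.mem_offDiag, Prod.forall, and_imp]
  grind

lemma shearDiscr_ne_zero (P : Finset (Fin 3 → K)) : shearDiscr P ≠ 0 := by
  refine mul_ne_zero (Finset.prod_ne_zero_iff.2 fun r _ h ↦ ?_)
    (Finset.prod_ne_zero_iff.2 fun q hq h ↦ (Finset.mem_offDiag.1 hq).2.2 ?_)
  · simpa [shearDen] using (eval_shearDen 0 r).symm.trans congr(eval 0 $h)
  · have separates : ∀ x y : K,
        q.1 0 - x * q.1 1 - y * q.1 2 = q.2 0 - x * q.2 1 - y * q.2 2 := fun x y ↦ by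
      simpa [shearDen, shearNum, sub_eq_zero] using congr(eval ![x, y, 0, 0] $h)
    ext i
    fin_cases i <;> simp only [Fin.zero_eta, Fin.mk_one, Fin.reduceFinMk]
    · linear_combination separates 0 0
    · linear_combination separates 0 0 - separates 1 0
    · linear_combination separates 0 0 - separates 0 1

lemma injOn_projShear_zero {s : Fin 4 → K} {P : Finset (Fin 3 → K)}
    (hs : eval s (shearDiscr P) ≠ 0) : Set.InjOn (fun r ↦ projShear s r 0) P := by
  obtain ⟨hden, hsep⟩ := eval_shearDiscr_ne_zero_iff.1 hs
  intro r hr r' hr' h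
  by_contra hne
  exact hsep r hr r' hr' hne ((div_eq_div_iff (hden r hr) (hden r' hr')).1 h)

lemma exists_eval_shearDiscr_ne_zero [Infinite K] (P Q : Finset (Fin 3 → K)) :
    ∃ s, eval s (shearDiscr P) ≠ 0 ∧ eval (s ∘ Equiv.swap 1 2) (shearDiscr Q) ≠ 0 := by
  have hQ : rename (Equiv.swap 1 2) (shearDiscr Q) ≠ 0 :=
    (map_ne_zero_iff _ (rename_injective _ (Equiv.injective _))).2 (shearDiscr_ne_zero Q)
  by_contra! h
  refine mul_ne_zero (shearDiscr_ne_zero P) hQ (MvPolynomial.funext fun s ↦ ?_)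
  rw [map_mul, eval_rename, map_zero, mul_eq_zero, or_iff_not_imp_left]
  exact h s

open Classical in
lemma card_rich_le [Infinite K] {P Q : Finset (Fin 3 → K)} {k m : ℕ}
    (hm : 3 * P.card ≤ (m + 1) ^ 2) (hd : ((3 * m).factorial : K) ≠ 0)
    (hPk : CollinearCardLE K P k)
    (hrich : ∀ b ∈ Q, 3 * m + k < (P.filter (Meets · b)).card) :
    Q.card ≤ 57 * m ^ 2 := by
  obtain ⟨s, hsP, hsQ⟩ := exists_eval_shearDiscr_ne_zero P Q
  have hdenP := (eval_shearDiscr_ne_zero_iff.1 hsP).1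
  have hdenQ := (eval_shearDiscr_ne_zero_iff.1 hsQ).1
  have hP := injOn_projShear_zero hsP
  have hQ := injOn_projShear_zero hsQ
  have injOn_projShear : Set.InjOn (projShear s) P := fun r hr r' hr' h ↦ hP hr hr' congr($h 0)
  rw [← Finset.card_image_of_injOn (f := projShear (s ∘ Equiv.swap 1 2))
    fun b hb b' hb' h ↦ hQ hb hb' congr($h 0)]
  refine card_rich_le_of_injOn (P := P.image (projShear s)) (k := k)
    (by rwa [Finset.card_image_of_injOn injOn_projShear]) hd ?_ (hPk.image_projShear hdenP) ?_ ?_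
  · rw [Finset.coe_image]
    exact Set.InjOn.image_of_comp (g := fun r : Fin 3 → K ↦ r 0) hP
  · rw [Finset.coe_image]
    exact Set.InjOn.image_of_comp (g := fun b : Fin 3 → K ↦ b 0) hQ
  · simp only [Finset.forall_mem_image]
    intro b hb
    refine (hrich b hb).trans_le ?_
    rw [Finset.filter_image, Finset.card_image_of_injOn
      (injOn_projShear.mono (Finset.coe_subset.2 (Finset.filter_subset _ _)))]
    refine Finset.card_le_card fun r hr ↦ ?_
    simp only [Finset.mem_filter] at hr ⊢
    exact ⟨hr.1, (meets_projShear_iff (hdenP r hr.1) (hdenQ b hb)).2 hr.2⟩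

end ProjectiveShear

section Incidences

variable {K : Type*} [Field K]

open Classical in
/-- The number of pairs `(r, b)` with `r ∈ P`, `b ∈ Q` and `Meets r b`: the incidences between the
points of `P` and the planes `{r | Meets r b}`, `b ∈ Q`. -/
noncomputable def incidences (P Q : Finset (Fin 3 → K)) : ℕ :=
  ∑ b ∈ Q, (P.filter (Meets · b)).card

lemma incidences_le_sdiff_add [DecidableEq K] (P P₁ Q : Finset (Fin 3 → K)) :
    incidences P Q ≤ incidences (P \ P₁) Q + incidences P₁ Q := by
  classical
  rw [incidences, incidences, incidences, ← Finset.sum_add_distrib]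
  gcongr with b
  calc (P.filter (Meets · b)).card ≤ ((P \ P₁ ∪ P₁).filter (Meets · b)).card := by
        gcongr
        exact le_sdiff_sup
    _ ≤ _ := by
        rw [Finset.filter_union]
        exact Finset.card_union_le _ _

lemma CollinearCardLE.mono {V : Type*} [AddCommGroup V] [Module K V] {P P' : Finset V} {k : ℕ}
    (h : CollinearCardLE K P k) (hP' : P' ⊆ P) : CollinearCardLE K P' k :=
  fun T hT ↦ h T (hT.trans hP')

lemma incidences_le_two_mul {Q : Finset (Fin 3 → K)} {k N M : ℕ}
    (h : ∀ P, CollinearCardLE K P k → P.card ≤ N → incidences P Q ≤ M)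
    {P : Finset (Fin 3 → K)} (hPk : CollinearCardLE K P k) (hP : P.card ≤ 2 * N) :
    incidences P Q ≤ 2 * M := by
  classical
  obtain ⟨P₁, hP₁, hcard⟩ := Finset.exists_subset_card_eq (min_le_right N P.card)
  have h₁ := h P₁ (hPk.mono hP₁) (hcard.trans_le (min_le_left _ _))
  have h₂ := h (P \ P₁) (hPk.mono Finset.sdiff_subset)
    (by rw [Finset.card_sdiff_of_subset hP₁]; omega)
  have := incidences_le_sdiff_add P P₁ Q
  omega

open Classical in
lemma incidences_le_filter_add (P Q : Finset (Fin 3 → K)) (n : ℕ) :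
    incidences P Q ≤
      incidences P {b ∈ Q | n < (P.filter (Meets · b)).card} + n * Q.card := by
  rw [incidences, incidences,
    ← Finset.sum_filter_add_sum_filter_not Q fun b ↦ n < (P.filter (Meets · b)).card]
  gcongr
  rw [mul_comm]
  refine (Finset.sum_le_card_nsmul _ _ n fun b hb ↦ ?_).trans
    (Nat.mul_le_mul_right n (Finset.card_filter_le _ _))
  exact not_lt.1 (Finset.mem_filter.1 hb).2

/-- The induction step quarters the point set: the rich planes are few by `card_rich_le`, and their
incidences are counted on the four quarters separately. -/
lemma incidences_le_of_infinite [Infinite K] {k : ℕ} {i : ℕ}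
    (hchar : ((6 * 2 ^ i).factorial : K) ≠ 0) {P : Finset (Fin 3 → K)}
    (hPk : CollinearCardLE K P k) (hP : P.card ≤ 4 ^ i) (Q : Finset (Fin 3 → K)) :
    incidences P Q ≤ (6 * 2 ^ i + k) * (Q.card + 912 * i * 4 ^ i) := by
  classical
  induction i generalizing P Q with
  | zero =>
    have : incidences P Q ≤ Q.card * 1 :=
      Finset.sum_le_card_nsmul _ _ 1 fun b _ ↦ (Finset.card_filter_le _ _).trans hP
    simp only [pow_zero, mul_one, mul_zero, add_zero] at this ⊢
    exact this.trans (Nat.le_mul_of_pos_left _ (by omega))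
  | succ i ih =>
    set n := 6 * 2 ^ (i + 1) + k with hn
    have hmono : 6 * 2 ^ i ≤ 6 * 2 ^ (i + 1) := by gcongr <;> omega
    have sq_eq : (2 * 2 ^ (i + 1)) ^ 2 = 4 * 4 ^ (i + 1) := by
      rw [mul_pow, pow_right_comm]
      norm_num
    set rich := Q.filter fun b ↦ n < (P.filter (Meets · b)).card
    have card_rich : rich.card ≤ 912 * 4 ^ i := by
      have := card_rich_le (P := P) (Q := rich) (k := k) (m := 2 * 2 ^ (i + 1))
        (by rw [add_sq, sq_eq]; omega) (by convert hchar using 3; ring) hPk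
        fun b hb ↦ by have := (Finset.mem_filter.1 hb).2; omega
      rw [sq_eq, pow_succ] at this
      omega
    have quarter : ∀ P', CollinearCardLE K P' k → P'.card ≤ 4 ^ i →
        incidences P' rich ≤ n * (912 * 4 ^ i + 912 * i * 4 ^ i) := fun P' hk' hc ↦
      (ih (natCast_factorial_ne_zero_of_le hmono hchar) hk' hc rich).trans
        (by rw [hn]; gcongr)
    have incidences_rich : incidences P rich ≤ 2 * (2 * (n * (912 * 4 ^ i + 912 * i * 4 ^ i))) :=
      incidences_le_two_mul (N := 2 * 4 ^ i) (fun P' ↦ incidences_le_two_mul quarter) hPk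
        (by rw [pow_succ] at hP; omega)
    calc incidences P Q ≤ incidences P rich + n * Q.card := incidences_le_filter_add P Q n
      _ ≤ 2 * (2 * (n * (912 * 4 ^ i + 912 * i * 4 ^ i))) + n * Q.card := by gcongr
      _ = n * (Q.card + 912 * (i + 1) * 4 ^ (i + 1)) := by ring

end Incidences

section BaseChange

variable {K F : Type*} [Field K] [Field F] (φ : F →+* K)

lemma meets_map_iff {r b : Fin 3 → F} : Meets (φ ∘ r) (φ ∘ b) ↔ Meets r b := by
  simp only [Meets, Function.comp_apply, ← map_mul, ← map_add, φ.injective.eq_iff]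

lemma injective_map_comp : Function.Injective fun r : Fin 3 → F ↦ φ ∘ r :=
  φ.injective.comp_left

lemma collinear_of_image_map {T : Set (Fin 3 → F)}
    (hT : Collinear K ((fun r ↦ φ ∘ r) '' T)) : Collinear F T := by
  rcases T.subsingleton_or_nontrivial with hsub | ⟨r, hr, r', hr', hne⟩
  · exact Set.Subsingleton.induction_on hsub (collinear_empty F _) (collinear_singleton F)
  obtain ⟨v, hv⟩ := (collinear_iff_of_mem (Set.mem_image_of_mem _ hr)).1 hT
  choose! c hc using fun q (hq : q ∈ T) ↦ hv _ (Set.mem_image_of_mem _ hq)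
  have coord : ∀ q ∈ T, ∀ i, φ (q i) - φ (r i) = c q * v i := fun q hq i ↦
    sub_eq_iff_eq_add.2 congr($(hc q hq) i)
  obtain ⟨i₀, h₀⟩ := Function.ne_iff.1 hne.symm
  refine collinear_of_cross_eq hr (sub_ne_zero.2 h₀) fun q hq i ↦ φ.injective ?_
  simp only [map_mul, map_sub, coord q hq, coord r' hr']
  ring

lemma CollinearCardLE.image_map [DecidableEq K] {P : Finset (Fin 3 → F)} {k : ℕ}
    (h : CollinearCardLE F P k) : CollinearCardLE K (P.image fun r ↦ φ ∘ r) k := by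
  intro T hT hcol
  obtain ⟨T', hT', rfl⟩ := Finset.subset_image_iff.1 hT
  rw [Finset.coe_image] at hcol
  exact Finset.card_image_le.trans (h T' hT' (collinear_of_image_map φ hcol))

lemma incidences_image_map [DecidableEq K] (P Q : Finset (Fin 3 → F)) :
    incidences (P.image fun r ↦ φ ∘ r) (Q.image fun r ↦ φ ∘ r) = incidences P Q := by
  classical
  rw [incidences, Finset.sum_image (injective_map_comp φ).injOn]
  refine Finset.sum_congr rfl fun b _ ↦ ?_
  rw [Finset.filter_image, Finset.card_image_of_injective _ (injective_map_comp φ)]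
  simp only [meets_map_iff]

lemma incidences_le {k : ℕ} {i : ℕ}
    (hchar : ((6 * 2 ^ i).factorial : F) ≠ 0) {P : Finset (Fin 3 → F)}
    (hPk : CollinearCardLE F P k) (hP : P.card ≤ 4 ^ i) (Q : Finset (Fin 3 → F)) :
    incidences P Q ≤ (6 * 2 ^ i + k) * (Q.card + 912 * i * 4 ^ i) := by
  classical
  set φ := algebraMap F (AlgebraicClosure F)
  have card_image : ∀ R : Finset (Fin 3 → F), (R.image fun r ↦ φ ∘ r).card = R.card :=
    fun R ↦ Finset.card_image_of_injective R (injective_map_comp φ)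
  rw [← incidences_image_map φ, ← card_image Q]
  exact incidences_le_of_infinite (by rwa [← map_natCast φ, map_ne_zero])
    (hPk.image_map φ) ((card_image P).trans_le hP) _

end BaseChange

section DilatedSums

variable {F : Type*} [Field F]

lemma injOn_or_eq_of_collinear {ι : Type*} {T : Set (ι → F)} (hT : Collinear F T) (i : ι) :
    T.InjOn (· i) ∨ ∀ r ∈ T, ∀ r' ∈ T, r i = r' i := by
  obtain ⟨r₀, v, h⟩ := (collinear_iff_exists_forall_eq_smul_vadd _).1 hT
  choose! c hc using h
  have coord : ∀ r ∈ T, ∀ j, r j = c r * v j + r₀ j := fun r hr j ↦ congr($(hc r hr) j)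
  by_cases hv : v i = 0
  · right
    intro r hr r' hr'
    rw [coord r hr, coord r' hr', hv, mul_zero, mul_zero]
  · left
    intro r hr r' hr' h
    simp only [coord r hr, coord r' hr', add_left_inj, mul_left_inj' hv] at h
    rw [hc r hr, hc r' hr', h]

/-- The number of ordered pairs in `T` on which `f` takes the same value. -/
def collisions {α β : Type*} [DecidableEq β] (f : α → β) (T : Finset α) : ℕ :=
  ((T ×ˢ T).filter fun z ↦ f z.1 = f z.2).card

/-- The sum `a * (s + b)` attached to `u = (a, b, s)`. -/
def dilatedSum (u : F × F × F) : F :=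
  u.1 * (u.2.2 + u.2.1)

/-- The point `(s, a, a * b)` attached to `u = (a, b, s)`: the points of `(a, b, s)` and
`(a', b', s')` meet if and only if `a * (s' + b) = a' * (s + b')`. -/
def dilatedPoint (u : F × F × F) : Fin 3 → F :=
  ![u.2.2, u.1, u.1 * u.2.1]

lemma dilatedPoint_injOn : Set.InjOn (dilatedPoint (F := F)) {u | u.1 ≠ 0} := by
  rintro ⟨a, b, s⟩ ha ⟨a', b', s'⟩ - h
  obtain rfl : s = s' := congr($h 0)
  obtain rfl : a = a' := congr($h 1)
  obtain rfl : b = b' := mul_left_cancel₀ ha congr($h 2)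
  rfl

lemma meets_dilatedPoint_iff {u v : F × F × F} :
    Meets (dilatedPoint u) (dilatedPoint v) ↔
      dilatedSum (u.1, u.2.1, v.2.2) = dilatedSum (v.1, v.2.1, u.2.2) := by
  simp [Meets, dilatedPoint, dilatedSum, mul_add]

variable [DecidableEq F]

lemma collinearCardLE_image_dilatedPoint {A B S : Finset F} {k : ℕ} (hA : A.card ≤ k)
    (hB : B.card ≤ k) (hS : S.card ≤ k) :
    CollinearCardLE F ((A ×ˢ B ×ˢ S).image dilatedPoint) k := by
  intro T hT hcol
  have mem : ∀ r ∈ T, r 0 ∈ S ∧ r 1 ∈ A ∧ ∃ b ∈ B, r 2 = r 1 * b := fun r hr ↦ by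
    obtain ⟨⟨a, b, s⟩, hu, rfl⟩ := Finset.mem_image.1 (hT hr)
    simp only [Finset.mem_product] at hu
    exact ⟨hu.2.2, hu.1, b, hu.2.1, rfl⟩
  obtain hinj | h₀ := injOn_or_eq_of_collinear hcol 0
  · exact (Finset.card_le_card_of_injOn _ (fun r hr ↦ (mem r hr).1) hinj).trans hS
  obtain hinj | h₁ := injOn_or_eq_of_collinear hcol 1
  · exact (Finset.card_le_card_of_injOn _ (fun r hr ↦ (mem r hr).2.1) hinj).trans hA
  obtain rfl | ⟨r₀, hr₀⟩ := T.eq_empty_or_nonempty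
  · simp
  refine (Finset.card_le_card_of_injOn (t := B.image (r₀ 1 * ·)) (· 2) (fun r hr ↦ ?_)
    fun r hr r' hr' h₂ ↦ ?_).trans (Finset.card_image_le.trans hB)
  · obtain ⟨b, hb, h⟩ := (mem r hr).2.2
    exact Finset.mem_coe.2 (Finset.mem_image.2 ⟨b, hb, (h₁ r₀ hr₀ r hr ▸ h).symm⟩)
  · ext j
    fin_cases j
    exacts [h₀ r hr r' hr', h₁ r hr r' hr', h₂]

lemma collisions_dilatedSum_eq_incidences {A B S : Finset F} (hA : 0 ∉ A) :
    collisions dilatedSum (A ×ˢ B ×ˢ S) =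
      incidences ((A ×ˢ B ×ˢ S).image dilatedPoint) ((A ×ˢ B ×ˢ S).image dilatedPoint) := by
  classical
  set T := A ×ˢ B ×ˢ S with hT
  have hinj : Set.InjOn dilatedPoint (T : Set (F × F × F)) := dilatedPoint_injOn.mono
    fun u hu (h₀ : u.1 = 0) ↦ hA (h₀ ▸ (Finset.mem_product.1 hu).1)
  have fiber : ∀ v ∈ T, ((T.image dilatedPoint).filter (Meets · (dilatedPoint v))).card =
      (T.filter fun u ↦ dilatedSum (u.1, u.2.1, v.2.2) = dilatedSum (v.1, v.2.1, u.2.2)).card := by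
    intro v _
    rw [Finset.filter_image, Finset.card_image_of_injOn (hinj.mono (Finset.filter_subset _ T))]
    simp only [meets_dilatedPoint_iff]
  rw [incidences, Finset.sum_image hinj, Finset.sum_congr rfl fiber, ← Finset.card_sigma]
  refine Finset.card_nbij' (fun z ↦ ⟨(z.2.1, z.2.2.1, z.1.2.2), (z.1.1, z.1.2.1, z.2.2.2)⟩)
    (fun z ↦ ((z.2.1, z.2.2.1, z.1.2.2), (z.1.1, z.1.2.1, z.2.2.2))) ?_ ?_
    (fun _ _ ↦ rfl) fun _ _ ↦ rfl <;>
  · intro z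
    simp only [hT, Finset.coe_filter, Finset.mem_product, Set.mem_ofPred_eq, Finset.coe_sigma,
      Set.mem_sigma_iff, Finset.mem_coe]
    tauto

lemma collisions_dilatedSum_le {A B S : Finset F} (hA : 0 ∉ A) {k i : ℕ} (hAk : A.card ≤ k)
    (hBk : B.card ≤ k) (hSk : S.card ≤ k) (hi : A.card * B.card * S.card ≤ 4 ^ i)
    (hchar : ((6 * 2 ^ i).factorial : F) ≠ 0) :
    collisions dilatedSum (A ×ˢ B ×ˢ S) ≤
      (6 * 2 ^ i + k) * (A.card * B.card * S.card + 912 * i * 4 ^ i) := by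
  have card_image : ((A ×ˢ B ×ˢ S).image dilatedPoint).card ≤ A.card * B.card * S.card := by
    rw [mul_assoc, ← Finset.card_product, ← Finset.card_product]
    exact Finset.card_image_le
  rw [collisions_dilatedSum_eq_incidences hA]
  exact (incidences_le hchar (collinearCardLE_image_dilatedPoint hAk hBk hSk)
    (card_image.trans hi) _).trans (by gcongr)

end DilatedSums

section Fibers

variable {α β : Type*} [DecidableEq β]

lemma sum_sq_card_fiber_le (f : α → β) (T : Finset α) (C : Finset β) :
    ∑ c ∈ C, (T.filter (f · = c)).card ^ 2 ≤ collisions f T := by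
  have square : ∀ c, (T.filter (f · = c)).card ^ 2 =
      (((T ×ˢ T).filter fun z ↦ f z.1 = f z.2).filter (f ·.1 = c)).card := by
    intro c
    rw [sq, ← Finset.card_product, ← Finset.filter_product, Finset.filter_filter]
    congr 1
    refine Finset.filter_congr fun z _ ↦ ?_
    constructor
    · rintro ⟨h, h'⟩
      exact ⟨h.trans h'.symm, h⟩
    · rintro ⟨h, h'⟩
      exact ⟨h', h ▸ h'⟩
  rw [Finset.sum_congr rfl fun c _ ↦ square c, Finset.sum_card_fiberwise_eq_card_filter]
  exact Finset.card_filter_le _ _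

lemma sq_card_filter_mem_le (f : α → β) (T : Finset α) (C : Finset β) :
    (T.filter (f · ∈ C)).card ^ 2 ≤ C.card * collisions f T := by
  rw [← Finset.sum_card_fiberwise_eq_card_filter]
  exact sq_sum_le_card_mul_sum_sq.trans (Nat.mul_le_mul_left _ (sum_sq_card_fiber_le f T C))

end Fibers

section PlaneLines

variable {F : Type*} [Field F] [Fintype F] [DecidableEq F]

lemma card_filter_eq_le_one {l l' : F × F} (h : l ≠ l') :
    (Finset.univ.filter fun x ↦ l.1 * x + l.2 = l'.1 * x + l'.2).card ≤ 1 := by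
  refine Finset.card_le_one.2 fun x hx y hy ↦ ?_
  simp only [Finset.mem_filter, Finset.mem_univ, true_and] at hx hy
  by_contra hxy
  have slope : l.1 = l'.1 := mul_right_cancel₀ (sub_ne_zero.2 hxy) (by linear_combination hx - hy)
  exact h (Prod.ext slope (by simpa [slope] using hx))

lemma sum_collisions_line_le (L : Finset (F × F)) :
    ∑ x, collisions (fun l : F × F ↦ l.1 * x + l.2) L ≤ Fintype.card F * L.card + L.card ^ 2 := by
  simp only [collisions, Finset.card_filter]
  rw [Finset.sum_comm]
  simp only [← Finset.card_filter]
  calc ∑ z ∈ L ×ˢ L, (Finset.univ.filter fun x ↦ z.1.1 * x + z.1.2 = z.2.1 * x + z.2.2).card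
      ≤ ∑ z ∈ L ×ˢ L, ((if z.1 = z.2 then Fintype.card F else 0) + 1) := by
        refine Finset.sum_le_sum fun z _ ↦ ?_
        split_ifs with h
        · exact (Finset.card_le_univ _).trans (Nat.le_succ _)
        · rw [zero_add]
          exact card_filter_eq_le_one h
    _ = Fintype.card F * L.card + L.card ^ 2 := by
        rw [Finset.sum_add_distrib, ← Finset.card_eq_sum_ones, Finset.card_product, ← sq]
        simp only [Finset.sum_product, Finset.sum_ite_eq, Finset.sum_ite_mem, Finset.inter_self,
          Finset.sum_const, smul_eq_mul]
        rw [mul_comm]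

lemma sum_sq_card_lines_sub_le (L : Finset (F × F)) :
    ∑ z : F × F, (((L.filter fun l ↦ l.1 * z.1 + l.2 = z.2).card : ℝ) -
      L.card / Fintype.card F) ^ 2 ≤ Fintype.card F * L.card := by
  set n : F × F → ℝ := fun z ↦ (L.filter fun l ↦ l.1 * z.1 + l.2 = z.2).card with hn
  set q := (Fintype.card F : ℝ) with q_def
  have hq : q ≠ 0 := Nat.cast_ne_zero.2 Fintype.card_ne_zero
  have first_moment : ∑ z, n z = q * L.card := by
    simp only [hn, Fintype.sum_prod_type, ← Nat.cast_sum,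
      Finset.sum_card_fiberwise_eq_card_filter, Finset.mem_univ, Finset.filter_true]
    simp [q_def]
  have second_moment : ∑ z, n z ^ 2 ≤ q * L.card + L.card ^ 2 := by
    rw [Fintype.sum_prod_type]
    have := (Finset.sum_le_sum fun x _ ↦ sum_sq_card_fiber_le (fun l : F × F ↦ l.1 * x + l.2) L
      Finset.univ).trans (sum_collisions_line_le L)
    simp only [q_def, hn]
    exact_mod_cast this
  calc ∑ z, (n z - L.card / q) ^ 2
      = ∑ z, n z ^ 2 - 2 * (L.card / q) * ∑ z, n z + q ^ 2 * (L.card / q) ^ 2 := by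
        simp only [sub_sq, Finset.sum_add_distrib, Finset.sum_sub_distrib, Finset.mul_sum,
          Finset.sum_const, Finset.card_univ, Fintype.card_prod, nsmul_eq_mul, Nat.cast_mul, sq q,
          ← q_def, mul_right_comm]
    _ = ∑ z, n z ^ 2 - L.card ^ 2 := by
        rw [first_moment]
        field_simp
        ring
    _ ≤ q * L.card := by linarith

lemma sq_card_line_sub_le (L : Finset (F × F)) (S C : Finset F) :
    ((((L ×ˢ S).filter fun z ↦ z.1.1 * z.2 + z.1.2 ∈ C).card : ℝ) -
      L.card * (S.card * C.card) / Fintype.card F) ^ 2 ≤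
      S.card * C.card * (Fintype.card F * L.card) := by
  set n : F × F → ℝ := fun z ↦ (L.filter fun l ↦ l.1 * z.1 + l.2 = z.2).card with hn
  have incidences_eq : (((L ×ˢ S).filter fun z ↦ z.1.1 * z.2 + z.1.2 ∈ C).card : ℝ) =
      ∑ z ∈ S ×ˢ C, n z := by
    simp only [hn, Finset.sum_product, ← Nat.cast_sum, Finset.sum_card_fiberwise_eq_card_filter]
    rw [Finset.card_filter, Finset.sum_product_right]
    simp only [Finset.card_filter]
  calc _ = (∑ z ∈ S ×ˢ C, (n z - L.card / Fintype.card F)) ^ 2 := by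
        rw [incidences_eq, Finset.sum_sub_distrib, Finset.sum_const, Finset.card_product,
          nsmul_eq_mul, Nat.cast_mul]
        ring
    _ ≤ S.card * C.card * ∑ z ∈ S ×ˢ C, (n z - L.card / Fintype.card F) ^ 2 := by
        rw [← Nat.cast_mul, ← Finset.card_product]
        exact sq_sum_le_card_mul_sum_sq
    _ ≤ S.card * C.card * ∑ z, (n z - L.card / Fintype.card F) ^ 2 := by
        gcongr
        exact Finset.subset_univ _
    _ ≤ _ := by
        gcongr
        exact sum_sq_card_lines_sub_le L

end PlaneLines

section PopularDifferences

lemma mul_card_le_card_filter_sub_mem {G : Type*} [AddCommGroup G] [DecidableEq G]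
    {A B S : Finset G} {t : ℕ} (hS : ∀ x ∈ S, t ≤ A.addConvolution (-B) x) :
    t * S.card ≤ ((A ×ˢ B).filter fun q ↦ q.1 - q.2 ∈ S).card := by
  rw [← Finset.sum_card_fiberwise_eq_card_filter, mul_comm, ← smul_eq_mul]
  simp only [Finset.card_sub_eq]
  exact Finset.card_nsmul_le_sum _ _ _ hS

variable {F : Type*} [Field F] [DecidableEq F] {A B S : Finset F} {t : ℕ}

/-- If `s = a - b`, then `a' * (s + b) = a' * a` is a product for every `a' ∈ A`. -/
lemma mul_card_mul_card_le_card_dilatedSum_mem (hS : ∀ x ∈ S, t ≤ A.addConvolution (-B) x) :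
    t * A.card * S.card ≤ ((A ×ˢ B ×ˢ S).filter (dilatedSum · ∈ A * A)).card := by
  calc t * A.card * S.card = A.card * (t * S.card) := by ring
    _ ≤ (A ×ˢ (A ×ˢ B).filter fun q ↦ q.1 - q.2 ∈ S).card := by
        rw [Finset.card_product]
        gcongr
        exact mul_card_le_card_filter_sub_mem hS
    _ ≤ _ := by
        refine Finset.card_le_card_of_injOn (fun z ↦ (z.1, z.2.2, z.2.1 - z.2.2)) ?_ ?_
        · rintro ⟨a', a, b⟩ h
          simp only [Finset.mem_coe, Finset.mem_product, Finset.mem_filter] at h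
          have product : dilatedSum (a', b, a - b) ∈ A * A := by
            rw [dilatedSum, sub_add_cancel]
            exact Finset.mul_mem_mul h.1 h.2.1.1
          simpa [h] using product
        · rintro ⟨a', a, b⟩ - ⟨c', c, d⟩ - h
          simp only [Prod.mk.injEq] at h ⊢
          obtain ⟨rfl, rfl, h⟩ := h
          exact ⟨rfl, sub_left_injective h, rfl⟩

lemma sq_card_dilatedSum_mem_sub_le [Fintype F] (hA : 0 ∉ A) (C : Finset F) :
    ((((A ×ˢ B ×ˢ S).filter (dilatedSum · ∈ C)).card : ℝ) -
      A.card * B.card * (S.card * C.card) / Fintype.card F) ^ 2 ≤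
      S.card * C.card * (Fintype.card F * (A.card * B.card)) := by
  set line : F × F → F × F := fun q ↦ (q.1, q.1 * q.2)
  have line_injOn : Set.InjOn line (A ×ˢ B : Finset (F × F)) := by
    rintro ⟨a, b⟩ hab ⟨a', b'⟩ - h
    obtain ⟨rfl, h⟩ := Prod.mk.inj h
    have ha : a ≠ 0 := ne_of_mem_of_not_mem (Finset.mem_product.1 hab).1 hA
    exact Prod.ext rfl (mul_left_cancel₀ ha h)
  have card_lines : ((A ×ˢ B).image line).card = A.card * B.card := by
    rw [Finset.card_image_of_injOn line_injOn, Finset.card_product]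
  have card_eq : ((A ×ˢ B ×ˢ S).filter (dilatedSum · ∈ C)).card =
      ((((A ×ˢ B).image line) ×ˢ S).filter fun z ↦ z.1.1 * z.2 + z.1.2 ∈ C).card := by
    simp only [Finset.card_filter, Finset.sum_product, Finset.sum_image line_injOn, dilatedSum,
      mul_add, line]
  have := sq_card_line_sub_le ((A ×ˢ B).image line) S C
  rwa [← card_eq, card_lines, Nat.cast_mul] at this

end PopularDifferences

section LevelSets

/-- The logarithm of `n`, truncated below at `1`. -/
noncomputable def logFactor (n : ℕ) : ℝ :=
  max 1 (Real.log n)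

lemma one_le_logFactor (n : ℕ) : 1 ≤ logFactor n :=
  le_max_left _ _

lemma log_le_logFactor (n : ℕ) : Real.log n ≤ logFactor n :=
  le_max_right _ _

lemma logFactor_mono : Monotone logFactor := by
  intro m n h
  rcases m.eq_zero_or_pos with rfl | hm
  · simp [logFactor]
  · exact max_le_max le_rfl (Real.log_le_log (by exact_mod_cast hm) (by exact_mod_cast h))

lemma natLog_four_add_two_le {a N : ℕ} (hN₀ : N ≠ 0) (hN : N ≤ a ^ 5) :
    (Nat.log 4 N + 2 : ℝ) ≤ 7 * logFactor a := by
  have one_le_log_four : 1 ≤ Real.log 4 := by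
    rw [Real.le_log_iff_exp_le (by norm_num)]
    linarith [Real.exp_one_lt_d9]
  have log_N : Real.log N ≤ 5 * Real.log a := by
    rw [← Nat.cast_ofNat, ← Real.log_pow]
    exact Real.log_le_log (by positivity) (by exact_mod_cast hN)
  have : (Nat.log 4 N : ℝ) ≤ Real.log N :=
    (Real.natLog_le_logb N 4).trans (div_le_self (Real.log_natCast_nonneg N) one_le_log_four)
  linarith [one_le_logFactor a, log_le_logFactor a]

lemma factorial_ne_zero_of_lt {p n : ℕ} [Fact p.Prime] (h : n < p) :
    (n.factorial : ZMod p) ≠ 0 := by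
  rw [Ne, ZMod.natCast_eq_zero_iff, (Fact.out : p.Prime).dvd_factorial]
  exact h.not_ge

variable {p : ℕ} [Fact p.Prime] {A B S : Finset (ZMod p)} {t : ℕ}

lemma sq_collisions_dilatedSum_le (hA : 0 ∉ A) {N : ℕ} (hN : A.card * B.card * S.card = N)
    (hN₀ : N ≠ 0) (hNp : 144 * N < p ^ 2) (hAN : A.card ^ 2 ≤ N) (hBN : B.card ^ 2 ≤ N)
    (hSN : S.card ^ 2 ≤ N) :
    collisions dilatedSum (A ×ˢ B ×ˢ S) ^ 2 ≤
      (13 * 3648) ^ 2 * (Nat.log 4 N + 2) ^ 2 * N ^ 3 := by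
  set i := Nat.log 4 N + 1 with hi
  have le_pow : N ≤ 4 ^ i := (Nat.lt_pow_succ_log_self (by norm_num) N).le
  have pow_le : 4 ^ i ≤ 4 * N := by
    rw [hi, pow_succ, mul_comm]
    exact Nat.mul_le_mul_left 4 (Nat.pow_log_le_self 4 hN₀)
  have sq_two_pow : (2 ^ i) ^ 2 = 4 ^ i := by rw [pow_right_comm]; norm_num
  have hchar : 6 * 2 ^ i < p := lt_of_pow_lt_pow_left₀ 2 (by positivity) (by
    rw [mul_pow, sq_two_pow]; omega)
  set k := Nat.sqrt N with hk
  have hk_sq : k ^ 2 ≤ N := Nat.sqrt_le' N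
  have first_factor : (6 * 2 ^ i + k) ^ 2 ≤ 169 * N := by
    rw [← sq_two_pow] at pow_le
    zify at pow_le hk_sq ⊢
    nlinarith [sq_nonneg ((2 : ℤ) ^ i - 2 * k)]
  have second_factor : N + 912 * i * 4 ^ i ≤ 3648 * (i + 1) * N := by
    calc N + 912 * i * 4 ^ i ≤ N + 912 * i * (4 * N) := by gcongr
      _ = 3648 * i * N + N := by ring
      _ ≤ 3648 * (i + 1) * N := by linarith
  have key := collisions_dilatedSum_le hA (Nat.le_sqrt'.2 hAN) (Nat.le_sqrt'.2 hBN)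
    (Nat.le_sqrt'.2 hSN) (hN.trans_le le_pow) (factorial_ne_zero_of_lt hchar)
  rw [hN] at key
  calc collisions dilatedSum (A ×ˢ B ×ˢ S) ^ 2
      ≤ ((6 * 2 ^ i + k) * (N + 912 * i * 4 ^ i)) ^ 2 := by gcongr
    _ = (6 * 2 ^ i + k) ^ 2 * (N + 912 * i * 4 ^ i) ^ 2 := by ring
    _ ≤ 169 * N * (3648 * (i + 1) * N) ^ 2 := by gcongr
    _ = (13 * 3648) ^ 2 * (i + 1) ^ 2 * N ^ 3 := by ring

lemma mul_card_le_card_mul_card (hS : ∀ x ∈ S, t ≤ A.addConvolution (-B) x) :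
    t * S.card ≤ A.card * B.card :=
  (mul_card_le_card_filter_sub_mem hS).trans
    ((Finset.card_filter_le _ _).trans (Finset.card_product A B).le)

lemma level_le_of_unbalanced {a b c s t : ℕ} (hac : a ≤ c) (hta : t ≤ a) (htb : t ≤ b)
    (hts : t * s ≤ a * b) (h : a ^ 3 ≤ b ^ 2 ∨ b * s ≤ a ∨ a * s ≤ b) :
    a * t ^ 4 * s ≤ b ^ 3 * c ^ 2 := by
  suffices a * t ^ 4 * s ≤ b ^ 3 * a ^ 2 from this.trans (by gcongr)
  rcases h with h | h | h
  · calc a * t ^ 4 * s = a * (t * s) * t ^ 3 := by ring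
      _ ≤ a * (a * b) * a ^ 3 := by gcongr
      _ ≤ a * (a * b) * b ^ 2 := by gcongr
      _ = b ^ 3 * a ^ 2 := by ring
  · calc a * t ^ 4 * s ≤ a * b ^ 4 * s := by gcongr
      _ = a * b ^ 3 * (b * s) := by ring
      _ ≤ a * b ^ 3 * a := by gcongr
      _ = b ^ 3 * a ^ 2 := by ring
  · calc a * t ^ 4 * s = a * s * t ^ 2 * t ^ 2 := by ring
      _ ≤ b * a ^ 2 * b ^ 2 := by gcongr
      _ = b ^ 3 * a ^ 2 := by ring

/-- `W` is the number of incidences: either the expected number `a * b * (s * c) / p` is at least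
half of the lower bound `t * a * s` for `W`, or the error term is. -/
lemma level_le_of_sq_sub_le {a b c s t p W : ℝ} (ha : 0 < a) (hb : 0 < b) (hc : 0 < c)
    (hs : 0 < s) (ht : 0 < t) (hp : 0 < p) (hta : t ≤ a) (hts : t * s ≤ a * b)
    (hap : a ^ 3 ≤ p ^ 2) (hW : t * a * s ≤ W)
    (hWp : (W - a * b * (s * c) / p) ^ 2 ≤ s * c * (p * (a * b))) (hN : p ^ 2 ≤ 144 * (a * b * s)) :
    a * t ^ 4 * s ≤ 2304 * (b ^ 3 * c ^ 2) := by
  rcases le_or_gt (t * p) (2 * (b * c)) with main | error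
  · refine le_of_mul_le_mul_right ?_ (pow_pos hp 2)
    calc a * t ^ 4 * s * p ^ 2 = a * t * (t * s) * (t * p) ^ 2 := by ring
      _ ≤ a * a * (a * b) * (2 * (b * c)) ^ 2 := by gcongr
      _ = 4 * (b ^ 3 * c ^ 2) * a ^ 3 := by ring
      _ ≤ 2304 * (b ^ 3 * c ^ 2) * p ^ 2 := by gcongr; norm_num
  · have expected_le : a * b * (s * c) / p ≤ t * a * s / 2 := by
      rw [div_le_div_iff₀ hp two_pos]
      calc a * b * (s * c) * 2 = a * s * (2 * (b * c)) := by ring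
        _ ≤ a * s * (t * p) := by gcongr
        _ = t * a * s * p := by ring
    have half_sq_le : (t * a * s / 2) ^ 2 ≤ s * c * (p * (a * b)) :=
      (pow_le_pow_left₀ (by positivity) (by linarith) 2).trans hWp
    have sq_mul_le : t ^ 2 * a * s ≤ 4 * (c * b * p) :=
      le_of_mul_le_mul_left (a := a * s) (by linarith) (by positivity)
    refine le_of_mul_le_mul_left (a := a * s) ?_ (by positivity)
    calc a * s * (a * t ^ 4 * s) = (t ^ 2 * a * s) ^ 2 := by ring
      _ ≤ (4 * (c * b * p)) ^ 2 := by gcongr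
      _ = 16 * (c ^ 2 * b ^ 2) * p ^ 2 := by ring
      _ ≤ 16 * (c ^ 2 * b ^ 2) * (144 * (a * b * s)) := by gcongr
      _ = a * s * (2304 * (b ^ 3 * c ^ 2)) := by ring

lemma level_le_of_sq_collisions_le {a b c s t L Q : ℝ} (ha : 0 < a) (hb : 0 < b)
    (hc : 0 < c) (hs : 0 < s) (ht : 0 < t) (hQ : (t * a * s) ^ 2 ≤ c * Q)
    (hQN : Q ^ 2 ≤ (13 * 3648) ^ 2 * (7 * L) ^ 2 * (a * b * s) ^ 3) :
    a * t ^ 4 * s ≤ 2 * 10 ^ 11 * L ^ 2 * (b ^ 3 * c ^ 2) := by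
  refine le_of_mul_le_mul_left (a := a ^ 3 * s ^ 3) ?_ (by positivity)
  calc a ^ 3 * s ^ 3 * (a * t ^ 4 * s) = ((t * a * s) ^ 2) ^ 2 := by ring
    _ ≤ (c * Q) ^ 2 := by gcongr
    _ = c ^ 2 * Q ^ 2 := by ring
    _ ≤ c ^ 2 * ((13 * 3648) ^ 2 * (7 * L) ^ 2 * (a * b * s) ^ 3) := by gcongr
    _ = a ^ 3 * s ^ 3 * ((13 * 3648 * 7) ^ 2 * L ^ 2 * (b ^ 3 * c ^ 2)) := by ring
    _ ≤ a ^ 3 * s ^ 3 * (2 * 10 ^ 11 * L ^ 2 * (b ^ 3 * c ^ 2)) := by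
      gcongr
      norm_num

lemma level_le_of_lt (hA : 0 ∉ A) (hS : ∀ x ∈ S, t ≤ A.addConvolution (-B) x) (ht : 0 < t)
    (hA₀ : 0 < A.card) (hB₀ : 0 < B.card) (hS₀ : 0 < S.card)
    (hBA : B.card ^ 2 ≤ A.card ^ 3) (hABS : A.card ≤ B.card * S.card)
    (hBAS : B.card ≤ A.card * S.card) (hp : 144 * (A.card * B.card * S.card) < p ^ 2) :
    (A.card : ℝ) * t ^ 4 * S.card ≤
      2 * 10 ^ 11 * logFactor A.card ^ 2 * (B.card ^ 3 * (A * A).card ^ 2) := by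
  have card_prod_pos : A.card * B.card * S.card ≠ 0 := by positivity
  have hSAB : S.card ≤ A.card * B.card :=
    (Nat.le_mul_of_pos_left _ ht).trans (mul_card_le_card_mul_card hS)
  have card_prod_le : A.card * B.card * S.card ≤ A.card ^ 5 := by
    calc A.card * B.card * S.card ≤ A.card * B.card * (A.card * B.card) := by gcongr
      _ = A.card ^ 2 * B.card ^ 2 := by ring
      _ ≤ A.card ^ 2 * A.card ^ 3 := by gcongr
      _ = A.card ^ 5 := by ring
  have collisions_lower : (t * A.card * S.card) ^ 2 ≤
      (A * A).card * collisions dilatedSum (A ×ˢ B ×ˢ S) :=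
    (Nat.pow_le_pow_left (mul_card_mul_card_le_card_dilatedSum_mem hS) 2).trans
      (sq_card_filter_mem_le dilatedSum _ _)
  have collisions_upper := sq_collisions_dilatedSum_le hA rfl card_prod_pos hp
    (by nlinarith) (by nlinarith) (by nlinarith)
  refine level_le_of_sq_collisions_le (by exact_mod_cast hA₀) (by exact_mod_cast hB₀)
    (by exact_mod_cast hA₀.trans_le Finset.card_le_card_mul_self₀) (by exact_mod_cast hS₀)
    (by exact_mod_cast ht) (Q := collisions dilatedSum (A ×ˢ B ×ˢ S))
    (by exact_mod_cast collisions_lower) ?_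
  calc (collisions dilatedSum (A ×ˢ B ×ˢ S) : ℝ) ^ 2
      ≤ (13 * 3648) ^ 2 * (Nat.log 4 (A.card * B.card * S.card) + 2) ^ 2 *
          (A.card * B.card * S.card) ^ 3 := by exact_mod_cast collisions_upper
    _ ≤ _ := by
      gcongr
      exact natLog_four_add_two_le card_prod_pos card_prod_le

lemma level_le_of_zero_notMem (hA : 0 ∉ A) (hAp : A.card ^ 3 ≤ p ^ 2) (ht : 0 < t)
    (hS : ∀ x ∈ S, t ≤ A.addConvolution (-B) x) :
    (A.card : ℝ) * t ^ 4 * S.card ≤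
      2 * 10 ^ 11 * logFactor A.card ^ 2 * (B.card ^ 3 * (A * A).card ^ 2) := by
  obtain rfl | ⟨x, hx⟩ := S.eq_empty_or_nonempty
  · simp only [Finset.card_empty, Nat.cast_zero, mul_zero]
    positivity
  have htA : t ≤ A.card := (hS x hx).trans Finset.addConvolution_le_card_left
  have htB : t ≤ B.card := by
    simpa using (hS x hx).trans Finset.addConvolution_le_card_right
  have hS₀ : 0 < S.card := Finset.card_pos.2 ⟨x, hx⟩
  have hAA : A.card ≤ (A * A).card := Finset.card_le_card_mul_self₀
  have htS := mul_card_le_card_mul_card hS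
  have of_const {c : ℝ} (hc : c ≤ 2 * 10 ^ 11)
      (h : (A.card : ℝ) * t ^ 4 * S.card ≤ c * (B.card ^ 3 * (A * A).card ^ 2)) :
      (A.card : ℝ) * t ^ 4 * S.card ≤
        2 * 10 ^ 11 * logFactor A.card ^ 2 * (B.card ^ 3 * (A * A).card ^ 2) := by
    refine h.trans (mul_le_mul_of_nonneg_right (hc.trans ?_) (by positivity))
    exact le_mul_of_one_le_right (by norm_num) (one_le_pow₀ (one_le_logFactor _))
  by_cases unbalanced :
      A.card ^ 3 ≤ B.card ^ 2 ∨ B.card * S.card ≤ A.card ∨ A.card * S.card ≤ B.card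
  · refine of_const (c := 1) (by norm_num) ?_
    rw [one_mul]
    exact_mod_cast level_le_of_unbalanced hAA htA htB htS unbalanced
  simp only [not_or, not_le] at unbalanced
  rcases lt_or_ge (144 * (A.card * B.card * S.card)) (p ^ 2) with small | large
  · exact level_le_of_lt hA hS ht (ht.trans_le htA) (ht.trans_le htB) hS₀ unbalanced.1.le
      unbalanced.2.1.le unbalanced.2.2.le small
  · have incidences_ge := mul_card_mul_card_le_card_dilatedSum_mem hS
    have incidences_sub := sq_card_dilatedSum_mem_sub_le (B := B) (S := S) hA (A * A)
    rw [ZMod.card] at incidences_sub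
    refine of_const (c := 2304) (by norm_num) (level_le_of_sq_sub_le ?_ ?_ ?_ ?_ ?_ ?_ ?_ ?_ ?_ ?_
      incidences_sub ?_)
    all_goals norm_cast
    · exact ht.trans_le htA
    · exact ht.trans_le htB
    · exact (ht.trans_le htA).trans_le hAA
    · exact (Fact.out : p.Prime).pos

lemma addConvolution_le_addConvolution_erase_add_one {G : Type*} [AddCommGroup G] [DecidableEq G]
    (A B : Finset G) (a x : G) :
    A.addConvolution (-B) x ≤ (A.erase a).addConvolution (-B) x + 1 := by
  rw [← Finset.card_inter_vadd, ← Finset.card_inter_vadd, Finset.erase_inter]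
  have := Finset.pred_card_le_card_erase (s := A ∩ (x +ᵥ B)) (a := a)
  omega

lemma card_mul_card_le (hS : ∀ x ∈ S, 1 ≤ A.addConvolution (-B) x) :
    A.card * S.card ≤ B.card ^ 3 * (A * A).card ^ 2 := by
  calc A.card * S.card ≤ A.card * (A.card * B.card) := by
        gcongr
        simpa using mul_card_le_card_mul_card hS
    _ = B.card * A.card ^ 2 := by ring
    _ ≤ B.card ^ 3 * (A * A).card ^ 2 := by
        have : A.card ≤ (A * A).card := Finset.card_le_card_mul_self₀
        gcongr
        exact Nat.le_self_pow three_ne_zero _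

/-- Removing `0` from `A` lowers the level `r + 1` by at most one. -/
lemma level_le (hAp : A.card ^ 3 ≤ p ^ 2) {r : ℕ}
    (hS : ∀ x ∈ S, r + 1 ≤ A.addConvolution (-B) x) :
    (A.card : ℝ) * (r + 1) ^ 4 * S.card ≤
      32 * (2 * 10 ^ 11) * logFactor A.card ^ 2 * (B.card ^ 3 * (A * A).card ^ 2) := by
  obtain rfl | ⟨x, hx⟩ := S.eq_empty_or_nonempty
  · simp only [Finset.card_empty, Nat.cast_zero, mul_zero]
    positivity
  have hrA : r + 1 ≤ A.card := (hS x hx).trans Finset.addConvolution_le_card_left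
  obtain rfl | hr := r.eq_zero_or_pos
  · calc (A.card : ℝ) * ((0 : ℕ) + 1) ^ 4 * S.card = (A.card * S.card : ℕ) := by simp
      _ ≤ 1 * (B.card ^ 3 * (A * A).card ^ 2) := by
        rw [one_mul]
        exact_mod_cast card_mul_card_le hS
      _ ≤ _ := by
        gcongr
        have := one_le_pow₀ (n := 2) (one_le_logFactor A.card)
        linarith
  set A' := A.erase 0
  have card_le : A'.card ≤ A.card := Finset.card_le_card (Finset.erase_subset _ _)
  have card_pred_le : A.card - 1 ≤ A'.card := Finset.pred_card_le_card_erase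
  have card_le_two_mul : (A.card : ℝ) ≤ 2 * A'.card := by
    norm_cast
    omega
  have level_erase := level_le_of_zero_notMem (Finset.notMem_erase 0 A)
    ((Nat.pow_le_pow_left card_le 3).trans hAp) hr fun x hx ↦ Nat.le_of_succ_le_succ <|
      (hS x hx).trans (addConvolution_le_addConvolution_erase_add_one A B 0 x)
  calc (A.card : ℝ) * (r + 1) ^ 4 * S.card ≤ 2 * A'.card * (2 * r) ^ 4 * S.card := by
        gcongr
        norm_cast
        omega
    _ = 32 * ((A'.card : ℝ) * r ^ 4 * S.card) := by ring
    _ ≤ 32 * (2 * 10 ^ 11 * logFactor A'.card ^ 2 * (B.card ^ 3 * (A' * A').card ^ 2)) := by gcongr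
    _ ≤ 32 * (2 * 10 ^ 11 * logFactor A.card ^ 2 * (B.card ^ 3 * (A * A).card ^ 2)) := by
        have := one_le_logFactor A'.card
        gcongr
        · exact logFactor_mono card_le
        · exact Finset.erase_subset _ _
        · exact Finset.erase_subset _ _
    _ = _ := by ring

end LevelSets

section Energy

lemma pow_four_le_sum (r : ℕ) : r ^ 4 ≤ ∑ t ∈ Finset.range r, 4 * (t + 1) ^ 3 := by
  induction r with
  | zero => rfl
  | succ r ih =>
    rw [Finset.sum_range_succ]
    linarith [show (r + 1) ^ 4 ≤ r ^ 4 + 4 * (r + 1) ^ 3 by ring_nf; omega]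

lemma sum_pow_four_le {ι : Type*} (X : Finset ι) (f : ι → ℕ) {n : ℕ} (hf : ∀ x ∈ X, f x ≤ n) :
    ∑ x ∈ X, f x ^ 4 ≤
      ∑ t ∈ Finset.range n, 4 * (t + 1) ^ 3 * (X.filter (t + 1 ≤ f ·)).card := by
  calc ∑ x ∈ X, f x ^ 4
      ≤ ∑ x ∈ X, ∑ t ∈ Finset.range n, if t + 1 ≤ f x then 4 * (t + 1) ^ 3 else 0 := by
        refine Finset.sum_le_sum fun x hx ↦ (pow_four_le_sum _).trans ?_
        rw [← Finset.sum_filter]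
        refine Finset.sum_le_sum_of_subset fun t ht ↦ ?_
        rw [Finset.mem_range] at ht
        exact Finset.mem_filter.2 ⟨Finset.mem_range.2 (ht.trans_le (hf x hx)), ht⟩
    _ = _ := by
        rw [Finset.sum_comm]
        simp only [← Finset.sum_filter, Finset.sum_const, smul_eq_mul, mul_comm]

lemma sum_range_inv_le (n : ℕ) :
    ∑ t ∈ Finset.range n, ((t : ℝ) + 1)⁻¹ ≤ 2 * logFactor n := by
  have := harmonic_le_one_add_log n
  simp only [harmonic, Nat.cast_add, Nat.cast_one, Rat.cast_sum, Rat.cast_inv, Rat.cast_add,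
    Rat.cast_natCast, Rat.cast_one] at this
  linarith [one_le_logFactor n, log_le_logFactor n]

lemma sum_pow_four_le_of_level_le {ι : Type*} (X : Finset ι) (f : ι → ℕ) {n : ℕ} {G : ℝ}
    (hf : ∀ x ∈ X, f x ≤ n) (hG : 0 ≤ G)
    (level : ∀ t : ℕ, ((t : ℝ) + 1) ^ 4 * (X.filter (t + 1 ≤ f ·)).card ≤ G) :
    ∑ x ∈ X, (f x : ℝ) ^ 4 ≤ 8 * logFactor n * G := by
  calc ∑ x ∈ X, (f x : ℝ) ^ 4
      ≤ ∑ t ∈ Finset.range n, 4 * ((t : ℝ) + 1) ^ 3 * (X.filter (t + 1 ≤ f ·)).card := by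
        exact_mod_cast sum_pow_four_le X f hf
    _ ≤ ∑ t ∈ Finset.range n, 4 * G * ((t : ℝ) + 1)⁻¹ := by
        refine Finset.sum_le_sum fun t _ ↦ ?_
        rw [← div_eq_mul_inv, le_div_iff₀ (by positivity)]
        linarith [level t]
    _ ≤ 4 * G * (2 * logFactor n) := by
        rw [← Finset.mul_sum]
        gcongr
        exact sum_range_inv_le n
    _ = 8 * logFactor n * G := by ring

lemma card_mul_sum_addConvolution_pow_four_le {p : ℕ} [Fact p.Prime] {A B : Finset (ZMod p)}
    (hA : 0 < A.card) (hAp : A.card ^ 3 ≤ p ^ 2) (X : Finset (ZMod p)) :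
    A.card * ∑ x ∈ X, (A.addConvolution (-B) x : ℝ) ^ 4 ≤
      10 ^ 14 * logFactor A.card ^ 3 * (B.card ^ 3 * (A * A).card ^ 2) := by
  have card_pos : (0 : ℝ) < A.card := Nat.cast_pos.2 hA
  have one_le := one_le_logFactor A.card
  rw [mul_comm, ← le_div_iff₀ card_pos]
  set M : ℝ := B.card ^ 3 * (A * A).card ^ 2
  calc ∑ x ∈ X, (A.addConvolution (-B) x : ℝ) ^ 4
      ≤ 8 * logFactor A.card * (32 * (2 * 10 ^ 11) * logFactor A.card ^ 2 * M / A.card) := by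
        refine sum_pow_four_le_of_level_le X _
          (fun x _ ↦ Finset.addConvolution_le_card_left) (by positivity) fun t ↦ ?_
        rw [le_div_iff₀' card_pos, ← mul_assoc]
        exact level_le hAp fun x hx ↦ (Finset.mem_filter.1 hx).2
    _ = 8 * 32 * (2 * 10 ^ 11) * logFactor A.card ^ 3 * M / A.card := by ring
    _ ≤ 10 ^ 14 * logFactor A.card ^ 3 * M / A.card := by
        gcongr
        norm_num

lemma pow_three_le_sq_of_lt_rpow {n p : ℕ} (h : (n : ℝ) < (p : ℝ) ^ ((2 : ℝ) / 3)) :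
    n ^ 3 ≤ p ^ 2 := by
  have cube_le : (n : ℝ) ^ 3 ≤ (p : ℝ) ^ 2 := by
    calc (n : ℝ) ^ 3 ≤ ((p : ℝ) ^ ((2 : ℝ) / 3)) ^ 3 := by gcongr
      _ = (p : ℝ) ^ 2 := by
        rw [← Real.rpow_mul_natCast p.cast_nonneg]
        norm_num
  exact_mod_cast cube_le

end Energy

end PointPlane

theorem stmt_15 :
    ∃ C : ℝ, 0 < C ∧
      ∀ (p : ℕ), p.Prime →
        ∀ (A B : Finset (ZMod p)), A.Nonempty → B.Nonempty →
          (A.card : ℝ) < (p : ℝ) ^ ((2 : ℝ) / 3) →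
          (∑ x ∈ A - B, (((A ×ˢ B).filter (fun q => q.1 - q.2 = x)).card : ℝ) ^ 4) ≤
            C * (max 1 (Real.log A.card)) ^ C
              * (B.card : ℝ) ^ 3 * ((A * A).card : ℝ) ^ 2 * (A.card : ℝ)⁻¹ := by
  refine ⟨10 ^ 14, by norm_num, fun p hp A B hA _ hAp ↦ ?_⟩
  have : Fact p.Prime := ⟨hp⟩
  have energy_le := PointPlane.card_mul_sum_addConvolution_pow_four_le (B := B) hA.card_pos
    (PointPlane.pow_three_le_sq_of_lt_rpow hAp) (A - B)
  have log_pow_le : PointPlane.logFactor A.card ^ 3 ≤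
      max 1 (Real.log A.card) ^ ((10 : ℝ) ^ 14) := by
    rw [← Real.rpow_natCast]
    exact Real.rpow_le_rpow_of_exponent_le (PointPlane.one_le_logFactor _) (by norm_num)
  simp only [Finset.card_sub_eq]
  rw [← div_eq_mul_inv, le_div_iff₀' (Nat.cast_pos.2 hA.card_pos), mul_assoc _ ((B.card : ℝ) ^ 3)]
  refine energy_le.trans ?_
  gcongr
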